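/- arXiv:2209.14505 — 9 statements merged into one kernel-verified Lean document; each statement's English description precedes it below -/
import Mathlib

section
/- (Lemma 1, existence.) If τs ≤ τb, then the prosumer's problem has an optimal solution: there exists (l*, g*, zs*, zb*) ∈ Xpro such that f(l*, g*, zs*, zb*) ≥ f(l, g, zs, zb) for every (l, g, zs, zb) ∈ Xpro. -/
/-- Prosumer objective: `x = (l, g, zs, zb)`. -/
noncomputable def fpro (P0 Q0 α p τs τb φ : ℝ) (C : ℝ → ℝ) (x : ℝ × ℝ × ℝ × ℝ) : ℝ :=
  (p + τs) * x.2.2.1 - (p + τb) * x.2.2.2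
    + (∫ m in (0:ℝ)..x.1, (P0 - (P0 / (α * Q0)) * m)) - C x.2.1 - φ

/-- Prosumer feasible set: `x = (l, g, zs, zb)`. -/
def Xpro (R G : ℝ) : Set (ℝ × ℝ × ℝ × ℝ) :=
  {x | 0 ≤ x.1 ∧ 0 ≤ x.2.1 ∧ 0 ≤ x.2.2.1 ∧ 0 ≤ x.2.2.2 ∧
       x.1 + x.2.2.1 - x.2.2.2 - x.2.1 - R = 0 ∧ x.2.1 ≤ G}

/- Buying and selling at once cannot pay when the selling rate is at most the buying rate, so only
the net export `z = g + R - l` matters, and it earns the smaller of its values at the two rates.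
Once `l` is so large that the marginal utility is below the selling rate, consuming more does not
pay either, since each further unit costs at least that rate; this confines the search to a
compact rectangle of pairs `(l, g)`, where the extreme value theorem applies. -/

open Set

theorem exists_isMaxOn_Ici_prod_of_antitoneOn {X Y β : Type*}
    [LinearOrder X] [TopologicalSpace X] [CompactIccSpace X] [TopologicalSpace Y] [LinearOrder β]
    {f : X × Y → β} {a L : X} {K : Set Y} (hK : IsCompact K) (hKne : K.Nonempty)
    (hf : UpperSemicontinuousOn f (Ici a ×ˢ K))
    (hanti : ∀ y ∈ K, AntitoneOn (fun x => f (x, y)) (Ici L)) :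
    ∃ q ∈ Ici a ×ˢ K, IsMaxOn f (Ici a ×ˢ K) q := by
  have hsub : Icc a (max a L) ×ˢ K ⊆ Ici a ×ˢ K := prod_mono_left Icc_subset_Ici_self
  obtain ⟨q, hq, hmax⟩ := (hf.mono hsub).exists_isMaxOn
    ((nonempty_Icc.2 (le_max_left a L)).prod hKne) (isCompact_Icc.prod hK)
  refine ⟨q, hsub hq, ?_⟩
  rintro ⟨x, y⟩ ⟨hx, hy⟩
  rcases le_total x (max a L) with hxM | hMx
  · exact hmax ⟨⟨hx, hxM⟩, hy⟩
  · have hLM : L ≤ max a L := le_max_right a L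
    calc f (x, y) ≤ f (max a L, y) := hanti y hy hLM (hLM.trans hMx) hMx
      _ ≤ f q := hmax ⟨⟨le_max_left a L, le_rfl⟩, hy⟩

section TwoPrices

variable {A : Type*} [Ring A] [LinearOrder A] [IsOrderedRing A] {s b : A}

theorem mul_sub_mul_le_min_mul_sub (hsb : s ≤ b) {u v : A} (hu : 0 ≤ u) (hv : 0 ≤ v) :
    s * u - b * v ≤ min (s * (u - v)) (b * (u - v)) := by
  rw [mul_sub, mul_sub]
  exact le_min (sub_le_sub_left (mul_le_mul_of_nonneg_right hsb hv) _)
    (sub_le_sub_right (mul_le_mul_of_nonneg_right hsb hu) _)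

theorem mul_posPart_sub_mul_negPart (hsb : s ≤ b) (z : A) :
    s * z⁺ - b * z⁻ = min (s * z) (b * z) := by
  rcases le_total 0 z with hz | hz
  · rw [posPart_of_nonneg hz, negPart_of_nonneg hz, mul_zero, sub_zero,
      min_eq_left (mul_le_mul_of_nonneg_right hsb hz)]
  · rw [posPart_of_nonpos hz, negPart_of_nonpos hz, mul_zero, zero_sub, mul_neg, neg_neg,
      min_eq_right (mul_le_mul_of_nonpos_right hsb hz)]

end TwoPrices

theorem antitoneOn_mul_sub_mul_sq_div_two {𝕜 : Type*} [Field 𝕜] [LinearOrder 𝕜]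
    [IsStrictOrderedRing 𝕜] (c : 𝕜) {k : 𝕜} (hk : 0 < k) :
    AntitoneOn (fun x => c * x - k * (x ^ 2 / 2)) (Ici (c / k)) := by
  intro x hx y hy hxy
  have hcx : c ≤ k * x := (div_le_iff₀' hk).1 hx
  have hcy : c ≤ k * y := (div_le_iff₀' hk).1 hy
  have hfactor : 0 ≤ (y - x) * ((k * x + k * y) / 2 - c) :=
    mul_nonneg (sub_nonneg.2 hxy) (by linarith)
  linarith

theorem integral_const_sub_const_mul (a k u v : ℝ) :
    ∫ m in u..v, (a - k * m) = a * (v - u) - k * ((v ^ 2 - u ^ 2) / 2) := by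
  rw [intervalIntegral.integral_sub intervalIntegrable_const
      ((continuous_const_mul k).intervalIntegrable u v),
    intervalIntegral.integral_const_mul, integral_id, intervalIntegral.integral_const,
    smul_eq_mul, mul_comm]

/-- The prosumer's objective as a function of `q = (l, g)` when only the net export
`q.2 + R - q.1` is traded. The minimum is the revenue from that export: for `τs ≤ τb` it is the
sale at `p + τs` of a positive export and the purchase at `p + τb` of a negative one. -/
noncomputable def nettedObjective (P0 Q0 α R p τs τb φ : ℝ) (C : ℝ → ℝ) (q : ℝ × ℝ) : ℝ :=
  min ((p + τs) * (q.2 + R - q.1)) ((p + τb) * (q.2 + R - q.1))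
    + (∫ m in (0 : ℝ)..q.1, (P0 - (P0 / (α * Q0)) * m)) - C q.2 - φ

section Prosumer

variable {P0 Q0 α R G p τs τb φ : ℝ} {C : ℝ → ℝ}

theorem fpro_le_nettedObjective (hτ : τs ≤ τb) {x : ℝ × ℝ × ℝ × ℝ} (hx : x ∈ Xpro R G) :
    fpro P0 Q0 α p τs τb φ C x ≤ nettedObjective P0 Q0 α R p τs τb φ C (x.1, x.2.1) := by
  obtain ⟨-, -, hzs, hzb, hbalance, -⟩ := hx
  have hnet : x.2.2.1 - x.2.2.2 = x.2.1 + R - x.1 := by linarith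
  have htrade := mul_sub_mul_le_min_mul_sub (add_le_add_right hτ p) hzs hzb
  rw [hnet] at htrade
  simp only [fpro, nettedObjective]
  gcongr

theorem fpro_netted (hτ : τs ≤ τb) (l g : ℝ) :
    fpro P0 Q0 α p τs τb φ C (l, g, (g + R - l)⁺, (g + R - l)⁻)
      = nettedObjective P0 Q0 α R p τs τb φ C (l, g) := by
  simp only [fpro, nettedObjective, mul_posPart_sub_mul_negPart (add_le_add_right hτ p)]

theorem netted_mem_Xpro {l g : ℝ} (hl : 0 ≤ l) (hg : g ∈ Icc 0 G) :
    (l, g, (g + R - l)⁺, (g + R - l)⁻) ∈ Xpro R G := by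
  have hbalance : l + (g + R - l)⁺ - (g + R - l)⁻ - g - R = 0 := by
    linarith [posPart_sub_negPart (g + R - l)]
  exact ⟨hl, hg.1, posPart_nonneg _, negPart_nonneg _, hbalance, hg.2⟩

theorem upperSemicontinuousOn_nettedObjective {S T : Set ℝ} (hC : LowerSemicontinuousOn C T) :
    UpperSemicontinuousOn (nettedObjective P0 Q0 α R p τs τb φ C) (S ×ˢ T) := by
  let rest (q : ℝ × ℝ) : ℝ := min ((p + τs) * (q.2 + R - q.1)) ((p + τb) * (q.2 + R - q.1))
    + (∫ m in (0 : ℝ)..q.1, (P0 - (P0 / (α * Q0)) * m)) - φ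
  have hrest : Continuous rest := by
    simp only [rest, integral_const_sub_const_mul]
    fun_prop
  have hcost : UpperSemicontinuousOn (fun q : ℝ × ℝ => -C q.2) (S ×ˢ T) :=
    continuous_neg.comp_lowerSemicontinuousOn_antitone
      (hC.comp continuousOn_snd fun _ hq => hq.2) fun _ _ => neg_le_neg
  have hsplit : nettedObjective P0 Q0 α R p τs τb φ C = fun q => rest q + -C q.2 := by
    funext q
    simp only [nettedObjective, rest]
    ring
  rw [hsplit]
  exact (hrest.upperSemicontinuous.upperSemicontinuousOn _).add hcost

theorem antitoneOn_nettedObjective (hk : 0 < P0 / (α * Q0)) (hτ : τs ≤ τb) (g : ℝ) :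
    AntitoneOn (fun l => nettedObjective P0 Q0 α R p τs τb φ C (l, g))
      (Ici ((P0 - (p + τs)) / (P0 / (α * Q0)))) := by
  intro l hl l' hl' hll'
  have hle : (P0 - (p + τb)) / (P0 / (α * Q0)) ≤ (P0 - (p + τs)) / (P0 / (α * Q0)) := by gcongr
  have hsell := antitoneOn_mul_sub_mul_sq_div_two (P0 - (p + τs)) hk hl hl' hll'
  have hbuy := antitoneOn_mul_sub_mul_sq_div_two (P0 - (p + τb)) hk
    (hle.trans hl) (hle.trans hl') hll'
  simp only [nettedObjective, integral_const_sub_const_mul, ← min_add_add_right]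
  gcongr ?_ - C g - φ
  exact min_le_min (by linarith) (by linarith)

end Prosumer

theorem prosumer_optimal_exists_general {P0 Q0 α R G p τs τb φ : ℝ} {C : ℝ → ℝ}
    (hk : 0 < P0 / (α * Q0)) (hG : 0 ≤ G) (hC : LowerSemicontinuousOn C (Icc 0 G))
    (hτ : τs ≤ τb) :
    ∃ x ∈ Xpro R G, IsMaxOn (fpro P0 Q0 α p τs τb φ C) (Xpro R G) x := by
  obtain ⟨⟨l, g⟩, ⟨hl, hg⟩, hmax⟩ := exists_isMaxOn_Ici_prod_of_antitoneOn (a := 0)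
    (f := nettedObjective P0 Q0 α R p τs τb φ C) isCompact_Icc (nonempty_Icc.2 hG)
    (upperSemicontinuousOn_nettedObjective hC) fun g _ => antitoneOn_nettedObjective hk hτ g
  refine ⟨_, netted_mem_Xpro hl hg, fun y hy => ?_⟩
  calc fpro P0 Q0 α p τs τb φ C y
      ≤ nettedObjective P0 Q0 α R p τs τb φ C (y.1, y.2.1) := fpro_le_nettedObjective hτ hy
    _ ≤ nettedObjective P0 Q0 α R p τs τb φ C (l, g) := hmax ⟨hy.1, hy.2.1, hy.2.2.2.2.2⟩
    _ = _ := (fpro_netted hτ l g).symm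

/-- (Lemma 1, existence.) If `τs ≤ τb`, the prosumer's problem has an optimal solution. -/
theorem prosumer_optimal_exists
    (P0 Q0 α R G p τs τb φ : ℝ)
    (hP0 : 0 < P0) (hQ0 : 0 < Q0) (hα0 : 0 < α) (hα1 : α < 1)
    (hR : 0 < R) (hG : 0 ≤ G) (hp : 0 ≤ p)
    (C : ℝ → ℝ) (hC : ContDiff ℝ 1 C) (hCconv : ConvexOn ℝ Set.univ C)
    (hτ : τs ≤ τb) :
    ∃ x ∈ Xpro R G, ∀ y ∈ Xpro R G,
      fpro P0 Q0 α p τs τb φ C y ≤ fpro P0 Q0 α p τs τb φ C x :=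
  prosumer_optimal_exists_general (by positivity) hG
    (hC.continuous.lowerSemicontinuous.lowerSemicontinuousOn _) hτ
end

section
/- (Lemma 1, no simultaneous buying and selling.) If τs < τb, then every optimal solution (l*, g*, zs*, zb*) of the prosumer's problem satisfies zs*·zb* = 0. -/
/-- The payoff of a prosumer who sells at price `ps`, buys at price `pb` and derives the net
benefit `V l g` from consuming `l` and generating `g`. Plans are encoded as `x = (l, g, zs, zb)`,
as in `Xpro`; a fixed charge is absorbed into `V`. -/
def tradingPayoff (ps pb : ℝ) (V : ℝ → ℝ → ℝ) (x : ℝ × ℝ × ℝ × ℝ) : ℝ :=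
  ps * x.2.2.1 - pb * x.2.2.2 + V x.1 x.2.1

/-- The plan obtained by netting out simultaneous trades: the amount that is both sold and bought
is removed from each side, so consumption, generation and the balance `zs - zb` do not change. -/
def netTrades (x : ℝ × ℝ × ℝ × ℝ) : ℝ × ℝ × ℝ × ℝ :=
  (x.1, x.2.1, x.2.2.1 - min x.2.2.1 x.2.2.2, x.2.2.2 - min x.2.2.1 x.2.2.2)

theorem netTrades_mem_Xpro {R G : ℝ} {x : ℝ × ℝ × ℝ × ℝ} (hx : x ∈ Xpro R G) :
    netTrades x ∈ Xpro R G := by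
  obtain ⟨hl, hg, -, -, hbalance, hgG⟩ := hx
  refine ⟨hl, hg, sub_nonneg.2 (min_le_left _ _), sub_nonneg.2 (min_le_right _ _), ?_, hgG⟩
  dsimp only [netTrades]
  linarith

theorem tradingPayoff_netTrades (ps pb : ℝ) (V : ℝ → ℝ → ℝ) (x : ℝ × ℝ × ℝ × ℝ) :
    tradingPayoff ps pb V (netTrades x) =
      tradingPayoff ps pb V x + (pb - ps) * min x.2.2.1 x.2.2.2 := by
  dsimp only [tradingPayoff, netTrades]
  ring

theorem fpro_eq_tradingPayoff (P0 Q0 α p τs τb φ : ℝ) (C : ℝ → ℝ) :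
    fpro P0 Q0 α p τs τb φ C = tradingPayoff (p + τs) (p + τb)
      fun l g ↦ (∫ m in (0 : ℝ)..l, (P0 - P0 / (α * Q0) * m)) - C g - φ := by
  funext x
  dsimp only [fpro, tradingPayoff]
  ring

theorem prosumer_no_simultaneous_buy_sell_general {R G ps pb : ℝ} (V : ℝ → ℝ → ℝ)
    (hprice : ps < pb) {x : ℝ × ℝ × ℝ × ℝ} (hx : x ∈ Xpro R G)
    (hmax : IsMaxOn (tradingPayoff ps pb V) (Xpro R G) x) :
    x.2.2.1 * x.2.2.2 = 0 := by
  have hgain : (pb - ps) * min x.2.2.1 x.2.2.2 ≤ 0 := by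
    have hle : tradingPayoff ps pb V (netTrades x) ≤ tradingPayoff ps pb V x :=
      hmax (netTrades_mem_Xpro hx)
    rw [tradingPayoff_netTrades] at hle
    linarith
  have hmin_nonpos : min x.2.2.1 x.2.2.2 ≤ 0 :=
    nonpos_of_mul_nonpos_right hgain (sub_pos.2 hprice)
  obtain ⟨-, -, hzs, hzb, -, -⟩ := hx
  exact mul_eq_zero.2 ((min_le_iff.1 hmin_nonpos).imp hzs.antisymm' hzb.antisymm')

/-- (Lemma 1, no simultaneous buying and selling.) If `τs < τb`, every optimal solution
`(l*, g*, zs*, zb*)` of the prosumer's problem satisfies `zs* * zb* = 0`. -/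
theorem prosumer_no_simultaneous_buy_sell
    (P0 Q0 α R G p τs τb φ : ℝ)
    (hP0 : 0 < P0) (hQ0 : 0 < Q0) (hα0 : 0 < α) (hα1 : α < 1)
    (hR : 0 < R) (hG : 0 ≤ G) (hp : 0 ≤ p)
    (C : ℝ → ℝ) (hC : ContDiff ℝ 1 C) (hCconv : ConvexOn ℝ Set.univ C)
    (hτ : τs < τb) :
    ∀ x ∈ Xpro R G,
      (∀ y ∈ Xpro R G, fpro P0 Q0 α p τs τb φ C y ≤ fpro P0 Q0 α p τs τb φ C x) →
      x.2.2.1 * x.2.2.2 = 0 := by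
  rw [fpro_eq_tradingPayoff]
  exact fun x hx hmax ↦
    prosumer_no_simultaneous_buy_sell_general _ (add_lt_add_right hτ p) hx hmax
end

section
/- (Coercivity of the prosumer objective, proof step of Lemma 1.) If τs < τb, then f is coercive on Xpro: for every sequence (xₙ) of points of Xpro with ‖xₙ‖ → ∞, one has f(xₙ) → −∞. -/
open Filter

/-!
Write `k = P0 / (α * Q0)` and `δ = τb - τs > 0`, and eliminate `zs` through the balance equation
`zs = zb + g + R - l`. Apart from a constant, what remains of `f` is a concave quadratic in `l`, a
function of `g ∈ [0, G]`, and a linear function of `zb` with slope `-δ`. Moving `δ * l` from the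
quadratic to the linear part turns the latter into `-δ * (l + zb)`; the other terms are bounded
above, and on `Xpro` the sum `l + zb` controls the norm, so `f` decreases at least linearly in it.
-/

theorem integral_const_sub_mul (c k a b : ℝ) :
    ∫ m in a..b, (c - k * m) = c * (b - a) - k * ((b ^ 2 - a ^ 2) / 2) := by
  rw [intervalIntegral.integral_sub intervalIntegrable_const
      (intervalIntegral.intervalIntegrable_id.const_mul k),
    intervalIntegral.integral_const, intervalIntegral.integral_const_mul, integral_id,
    smul_eq_mul, mul_comm (b - a)]

theorem mul_sub_mul_sq_div_two_le {K : Type*} [Field K] [LinearOrder K] [IsStrictOrderedRing K]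
    {k : K} (hk : 0 < k) (c x : K) : c * x - k * x ^ 2 / 2 ≤ c ^ 2 / (2 * k) := by
  have complete_square :
      c ^ 2 / (2 * k) - (c * x - k * x ^ 2 / 2) = (c - k * x) ^ 2 / (2 * k) := by
    field_simp
    ring
  rw [← sub_nonneg, complete_square]
  positivity

theorem tendsto_cobounded_inf_principal_atBot_of_le_sub_mul_norm {E : Type*} [SeminormedAddGroup E]
    {s : Set E} {f : E → ℝ} {A δ : ℝ} (hδ : 0 < δ) (hf : ∀ x ∈ s, f x ≤ A - δ * ‖x‖) :
    Tendsto f (Bornology.cobounded E ⊓ 𝓟 s) atBot := by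
  have bound_atBot : Tendsto (fun x : E => A - δ * ‖x‖) (Bornology.cobounded E) atBot :=
    tendsto_const_nhds.add_atBot
      (tendsto_neg_atTop_atBot.comp (tendsto_norm_cobounded_atTop.const_mul_atTop hδ))
  exact tendsto_atBot_mono' _ (eventually_inf_principal.2 (.of_forall hf))
    (bound_atBot.mono_left inf_le_left)

section Prosumer

variable {P0 Q0 α R G p τs τb φ : ℝ} {C : ℝ → ℝ} {x : ℝ × ℝ × ℝ × ℝ}

theorem norm_le_of_mem_Xpro (hx : x ∈ Xpro R G) : ‖x‖ ≤ x.1 + x.2.2.2 + (G + |R|) := by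
  obtain ⟨hl, hg, hzs, hzb, balance, hgG⟩ := hx
  have hR := le_abs_self R
  have hR₀ := abs_nonneg R
  simp only [Prod.norm_def, Real.norm_of_nonneg hl, Real.norm_of_nonneg hg,
    Real.norm_of_nonneg hzs, Real.norm_of_nonneg hzb, sup_le_iff]
  refine ⟨?_, ?_, ?_, ?_⟩ <;> linarith

theorem fpro_eq_of_mem_Xpro (hx : x ∈ Xpro R G) :
    fpro P0 Q0 α p τs τb φ C x =
      ((P0 - (p + τs) + (τb - τs)) * x.1 - P0 / (α * Q0) * x.1 ^ 2 / 2)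
        + ((p + τs) * (x.2.1 + R) - C x.2.1 - φ) - (τb - τs) * (x.1 + x.2.2.2) := by
  obtain ⟨-, -, -, -, balance, -⟩ := hx
  have zs_eq : x.2.2.1 = x.2.2.2 + x.2.1 + R - x.1 := by linarith
  rw [fpro, integral_const_sub_mul, zs_eq]
  ring

theorem exists_forall_mem_Xpro_fpro_le_sub_mul_norm (hk : 0 < P0 / (α * Q0))
    (hC : BddBelow (C '' Set.Icc 0 G)) (hτ : τs ≤ τb) :
    ∃ A, ∀ x ∈ Xpro R G, fpro P0 Q0 α p τs τb φ C x ≤ A - (τb - τs) * ‖x‖ := by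
  obtain ⟨c, hc⟩ := hC
  refine ⟨(P0 - (p + τs) + (τb - τs)) ^ 2 / (2 * (P0 / (α * Q0)))
    + (|p + τs| * G + (p + τs) * R - c - φ) + (τb - τs) * (G + |R|), fun x hx => ?_⟩
  have ⟨_, hg, _, _, _, hgG⟩ := hx
  have cost_ge : c ≤ C x.2.1 := hc (Set.mem_image_of_mem C ⟨hg, hgG⟩)
  have generation_le : (p + τs) * x.2.1 ≤ |p + τs| * G :=
    mul_le_mul (le_abs_self _) hgG hg (abs_nonneg _)
  have consumption_le :=
    mul_sub_mul_sq_div_two_le hk (P0 - (p + τs) + (τb - τs)) x.1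
  have norm_le := mul_le_mul_of_nonneg_left (norm_le_of_mem_Xpro hx) (sub_nonneg.2 hτ)
  rw [fpro_eq_of_mem_Xpro hx]
  linarith

theorem prosumer_objective_coercive_general (hk : 0 < P0 / (α * Q0))
    (hC : BddBelow (C '' Set.Icc 0 G)) (hτ : τs < τb) :
    Tendsto (fpro P0 Q0 α p τs τb φ C)
      (Bornology.cobounded (ℝ × ℝ × ℝ × ℝ) ⊓ 𝓟 (Xpro R G)) atBot :=
  have ⟨_, fpro_le⟩ := exists_forall_mem_Xpro_fpro_le_sub_mul_norm hk hC hτ.le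
  tendsto_cobounded_inf_principal_atBot_of_le_sub_mul_norm (sub_pos.2 hτ) fpro_le

end Prosumer

/-- (Coercivity of the prosumer objective.) If `τs < τb`, then `f` is coercive on `Xpro`:
along every sequence of feasible points whose norm tends to `∞`, `f` tends to `-∞`. -/
theorem prosumer_objective_coercive
    (P0 Q0 α R G p τs τb φ : ℝ)
    (hP0 : 0 < P0) (hQ0 : 0 < Q0) (hα0 : 0 < α) (hα1 : α < 1)
    (hR : 0 < R) (hG : 0 ≤ G) (hp : 0 ≤ p)
    (C : ℝ → ℝ) (hC : ContDiff ℝ 1 C) (hCconv : ConvexOn ℝ Set.univ C)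
    (hτ : τs < τb)
    (x : ℕ → ℝ × ℝ × ℝ × ℝ) (hx : ∀ n, x n ∈ Xpro R G)
    (hnorm : Tendsto (fun n => ‖x n‖) atTop atTop) :
    Tendsto (fun n => fpro P0 Q0 α p τs τb φ C (x n)) atTop atBot :=
  (prosumer_objective_coercive_general (by positivity)
    (isCompact_Icc.bddBelow_image hC.continuous.continuousOn) hτ).comp
      (tendsto_inf.2 ⟨tendsto_norm_atTop_iff_cobounded.1 hnorm,
        tendsto_principal.2 (.of_forall hx)⟩)
end

section
/- (Netting transformation under net metering.) Suppose τs = τb and (l*, g*, zs*, zb*) is an optimal solution of the prosumer's problem. Define z̃s = max(zs* − zb*, 0) and z̃b = max(zb* − zs*, 0). Then (l*, g*, z̃s, z̃b) ∈ Xpro, it is also an optimal solution of the prosumer's problem, and z̃s·z̃b = 0. -/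
/-!
Write `k = min zs zb`. Netting replaces `(zs, zb)` by `(zs - k, zb - k)`: this keeps the balance
constraint, which only sees `zs - zb`, and adds `(τb - τs) * k` to the objective. This gain is
nonnegative when `τs ≤ τb` and vanishes under net metering.
-/

/-- The netting transformation of a prosumer decision `(l, g, zs, zb)`: sales and purchases are
replaced by the positive parts of their two differences. -/
def netting (x : ℝ × ℝ × ℝ × ℝ) : ℝ × ℝ × ℝ × ℝ :=
  (x.1, x.2.1, max (x.2.2.1 - x.2.2.2) 0, max (x.2.2.2 - x.2.2.1) 0)

theorem max_sub_zero_eq_sub_min {A : Type*} [AddCommGroup A] [LinearOrder A]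
    [IsOrderedAddMonoid A] (a b : A) : max (a - b) 0 = a - min a b := by
  rw [← sub_self a, max_sub_sub_left, min_comm]

theorem max_sub_zero_mul_max_sub_zero {A : Type*} [NonUnitalNonAssocRing A] [LinearOrder A]
    [IsOrderedAddMonoid A] (a b : A) : max (a - b) 0 * max (b - a) 0 = 0 := by
  rcases le_total a b with hab | hba
  · rw [max_eq_right (sub_nonpos.mpr hab), zero_mul]
  · rw [max_eq_right (sub_nonpos.mpr hba), mul_zero]

theorem netting_mem_Xpro {R G : ℝ} {x : ℝ × ℝ × ℝ × ℝ} (hx : x ∈ Xpro R G) :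
    netting x ∈ Xpro R G := by
  obtain ⟨hl, hg, -, -, hbalance, hgG⟩ := hx
  refine ⟨hl, hg, le_max_right _ _, le_max_right _ _, ?_, hgG⟩
  simp only [netting, max_sub_zero_eq_sub_min, min_comm x.2.2.2]
  linear_combination hbalance

section Objective

variable {P0 Q0 α p τs τb φ : ℝ} {C : ℝ → ℝ}

theorem fpro_netting (x : ℝ × ℝ × ℝ × ℝ) :
    fpro P0 Q0 α p τs τb φ C (netting x) =
      fpro P0 Q0 α p τs τb φ C x + (τb - τs) * min x.2.2.1 x.2.2.2 := by
  simp only [fpro, netting, max_sub_zero_eq_sub_min, min_comm x.2.2.2]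
  ring

theorem fpro_le_fpro_netting {x : ℝ × ℝ × ℝ × ℝ} (hτ : τs ≤ τb) (hzs : 0 ≤ x.2.2.1)
    (hzb : 0 ≤ x.2.2.2) :
    fpro P0 Q0 α p τs τb φ C x ≤ fpro P0 Q0 α p τs τb φ C (netting x) := by
  rw [fpro_netting]
  exact le_add_of_nonneg_right (mul_nonneg (sub_nonneg.mpr hτ) (le_min hzs hzb))

theorem prosumer_netting_transformation_general {R G : ℝ} {x : ℝ × ℝ × ℝ × ℝ}
    (hτ : τs ≤ τb) (hx : x ∈ Xpro R G)
    (hopt : IsMaxOn (fpro P0 Q0 α p τs τb φ C) (Xpro R G) x) :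
    netting x ∈ Xpro R G ∧
      IsMaxOn (fpro P0 Q0 α p τs τb φ C) (Xpro R G) (netting x) ∧
      (netting x).2.2.1 * (netting x).2.2.2 = 0 := by
  have ⟨_, _, hzs, hzb, _⟩ := hx
  exact ⟨netting_mem_Xpro hx, fun _ hy => (hopt hy).trans (fpro_le_fpro_netting hτ hzs hzb),
    max_sub_zero_mul_max_sub_zero x.2.2.1 x.2.2.2⟩

end Objective

/-- (Netting transformation under net metering.) If `τs = τb` and `(l*, g*, zs*, zb*)` is
optimal, then `(l*, g*, max (zs*-zb*) 0, max (zb*-zs*) 0)` is feasible, also optimal, and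
the product of the two netted quantities is zero. -/
theorem prosumer_netting_transformation
    (P0 Q0 α R G p τs τb φ : ℝ)
    (hP0 : 0 < P0) (hQ0 : 0 < Q0) (hα0 : 0 < α) (hα1 : α < 1)
    (hR : 0 < R) (hG : 0 ≤ G) (hp : 0 ≤ p)
    (C : ℝ → ℝ) (hC : ContDiff ℝ 1 C) (hCconv : ConvexOn ℝ Set.univ C)
    (hτ : τs = τb)
    (x : ℝ × ℝ × ℝ × ℝ) (hx : x ∈ Xpro R G)
    (hopt : ∀ y ∈ Xpro R G, fpro P0 Q0 α p τs τb φ C y ≤ fpro P0 Q0 α p τs τb φ C x) :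
    (x.1, x.2.1, max (x.2.2.1 - x.2.2.2) 0, max (x.2.2.2 - x.2.2.1) 0) ∈ Xpro R G ∧
    (∀ y ∈ Xpro R G, fpro P0 Q0 α p τs τb φ C y ≤
      fpro P0 Q0 α p τs τb φ C
        (x.1, x.2.1, max (x.2.2.1 - x.2.2.2) 0, max (x.2.2.2 - x.2.2.1) 0)) ∧
    max (x.2.2.1 - x.2.2.2) 0 * max (x.2.2.2 - x.2.2.1) 0 = 0 := by
  exact prosumer_netting_transformation_general hτ.le hx hopt
end

section
/- (KKT conditions are necessary and sufficient for the prosumer's problem.) A point (l, g, zs, zb) ∈ Xpro is an optimal solution of the prosumer's problem if and only if there exist δ ∈ ℝ and κ ≥ 0 such that: 0 ≤ l ⊥ P0 − (P0/(α·Q0))·l − δ ≤ 0; 0 ≤ g ⊥ −C′(g) + δ − κ ≤ 0; 0 ≤ κ ⊥ g − G ≤ 0; 0 ≤ zs ⊥ (p + τs) − δ ≤ 0; and 0 ≤ zb ⊥ −(p + τb) + δ ≤ 0. -/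
/-- `0 ≤ a ⊥ b ≤ 0` : complementarity of `a ≥ 0` and `b ≤ 0`. -/
def perp (a b : ℝ) : Prop := 0 ≤ a ∧ b ≤ 0 ∧ a * b = 0

/-!
Dualize only the energy balance. The problem is concave and the balance is a single linear
constraint that can be violated in both directions within the bounds, so a point is optimal iff,
for some price `δ` of the balance, it maximizes the Lagrangian over the bounds alone: `δ` is any
number separating the slopes of the objective against the constraint value on either side of the
optimum. The Lagrangian is a sum of concave functions of one coordinate each, so this holds iff
every coordinate is optimal in its own interval, and the one-variable first-order conditions are
the five complementarity conditions, `κ` being the multiplier of `g ≤ G`.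
-/

open Set

section Multiplier

variable {E : Type*} [AddCommGroup E] [Module ℝ E] {K : Set E} {f : E → ℝ} {a : E →ₗ[ℝ] ℝ} {x : E}

lemma div_sub_le_div_sub_of_isMaxOn_level (hf : ConcaveOn ℝ K f)
    (hmax : IsMaxOn f {y ∈ K | a y = a x} x) {y z : E} (hy : y ∈ K) (hz : z ∈ K)
    (hxy : a x < a y) (hzx : a z < a x) :
    (f y - f x) / (a y - a x) ≤ (f x - f z) / (a x - a z) := by
  set u := a y - a x with hu
  set v := a x - a z with hv
  have hu_pos : 0 < u := sub_pos.2 hxy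
  have hv_pos : 0 < v := sub_pos.2 hzx
  have hsum : v / (u + v) + u / (u + v) = 1 := by field_simp; ring
  -- The weights are chosen so that the convex combination lies on the level of `x`.
  set w := (v / (u + v)) • y + (u / (u + v)) • z with hw
  have hwK : w ∈ K := hf.1 hy hz (by positivity) (by positivity) hsum
  have hwa : a w = a x := by
    simp only [hw, map_add, map_smul, smul_eq_mul]
    field_simp
    rw [hu, hv]
    ring
  have hfw : (v / (u + v)) * f y + (u / (u + v)) * f z ≤ f w :=
    hf.2 hy hz (by positivity) (by positivity) hsum
  have hfx : (v * f y + u * f z) / (u + v) ≤ f x := by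
    calc (v * f y + u * f z) / (u + v) = (v / (u + v)) * f y + (u / (u + v)) * f z := by ring
      _ ≤ f x := hfw.trans (hmax ⟨hwK, hwa⟩)
  rw [div_le_iff₀ (by positivity)] at hfx
  rw [div_le_div_iff₀ hu_pos hv_pos]
  linarith

lemma isMaxOn_level_iff_exists_multiplier (hf : ConcaveOn ℝ K f)
    (hbelow : ∃ z ∈ K, a z < a x) (habove : ∃ y ∈ K, a x < a y) :
    IsMaxOn f {y ∈ K | a y = a x} x ↔ ∃ δ : ℝ, IsMaxOn (fun y ↦ f y - δ * a y) K x := by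
  constructor
  · intro hmax
    obtain ⟨z₀, hz₀⟩ := hbelow
    obtain ⟨y₀, hy₀⟩ := habove
    obtain ⟨δ, hδ_above, hδ_below⟩ := exists_between_of_forall_le
      (s := (fun y ↦ (f y - f x) / (a y - a x)) '' {y ∈ K | a x < a y})
      (t := (fun z ↦ (f x - f z) / (a x - a z)) '' {z ∈ K | a z < a x})
      ⟨_, mem_image_of_mem _ hy₀⟩ ⟨_, mem_image_of_mem _ hz₀⟩ (by
        rintro _ ⟨y, hy, rfl⟩ _ ⟨z, hz, rfl⟩
        exact div_sub_le_div_sub_of_isMaxOn_level hf hmax hy.1 hz.1 hy.2 hz.2)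
    refine ⟨δ, isMaxOn_iff.2 fun y hy ↦ ?_⟩
    rcases lt_trichotomy (a y) (a x) with hyx | hyx | hxy
    · have := (le_div_iff₀ (sub_pos.2 hyx)).1 (hδ_below ⟨y, ⟨hy, hyx⟩, rfl⟩)
      linarith
    · have : f y ≤ f x := hmax ⟨hy, hyx⟩
      rwa [hyx, sub_le_sub_iff_right]
    · have := (div_le_iff₀ (sub_pos.2 hxy)).1 (hδ_above ⟨y, ⟨hy, hxy⟩, rfl⟩)
      linarith
  · rintro ⟨δ, hδ⟩ y ⟨hy, hyx⟩
    simpa [hyx] using hδ hy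

end Multiplier

section Product

lemma isMaxOn_prod_add_iff {α β M : Type*} [AddCommMonoid M] [PartialOrder M]
    [IsOrderedCancelAddMonoid M] {s : Set α} {t : Set β} {f : α → M} {g : β → M} {x : α × β}
    (hx : x ∈ s ×ˢ t) :
    IsMaxOn (fun y : α × β ↦ f y.1 + g y.2) (s ×ˢ t) x ↔ IsMaxOn f s x.1 ∧ IsMaxOn g t x.2 := by
  refine ⟨fun h ↦ ⟨fun y hy ↦ ?_, fun y hy ↦ ?_⟩,
    fun h ↦ isMaxOn_iff.2 fun y hy ↦ add_le_add (h.1 hy.1) (h.2 hy.2)⟩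
  · simpa using h (mk_mem_prod hy hx.2)
  · simpa using h (mk_mem_prod hx.1 hy)

lemma concaveOn_prod_add {𝕜 E F M : Type*} [Semiring 𝕜] [PartialOrder 𝕜]
    [AddCommMonoid E] [Module 𝕜 E] [AddCommMonoid F] [Module 𝕜 F]
    [AddCommMonoid M] [PartialOrder M] [IsOrderedAddMonoid M] [Module 𝕜 M]
    {s : Set E} {t : Set F} {f : E → M} {g : F → M} (hf : ConcaveOn 𝕜 s f) (hg : ConcaveOn 𝕜 t g) :
    ConcaveOn 𝕜 (s ×ˢ t) (fun y ↦ f y.1 + g y.2) :=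
  ((hf.comp_linearMap (LinearMap.fst 𝕜 E F)).subset (fun _ hy ↦ hy.1) (hf.1.prod hg.1)).add
    ((hg.comp_linearMap (LinearMap.snd 𝕜 E F)).subset (fun _ hy ↦ hy.2) (hf.1.prod hg.1))

end Product

section OneVariable

variable {s : Set ℝ} {f : ℝ → ℝ} {f' a b x : ℝ}

lemma isMaxOn_iff_forall_mul_sub_nonpos (hf : ConcaveOn ℝ s f) (hx : x ∈ s)
    (hf' : HasDerivWithinAt f f' s x) : IsMaxOn f s x ↔ ∀ y ∈ s, f' * (y - x) ≤ 0 := by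
  constructor
  · intro hmax y hy
    have := hmax.localize.hasFDerivWithinAt_nonpos hf'.hasFDerivWithinAt
      (sub_mem_posTangentConeAt_of_segment_subset (hf.1.segment_subset hx hy))
    simpa [mul_comm] using this
  · intro hvar y hy
    suffices f y - f x ≤ f' * (y - x) from sub_nonpos.1 (this.trans (hvar y hy))
    rcases lt_trichotomy x y with hxy | rfl | hyx
    · have := hf.slope_le_of_hasDerivWithinAt hx hy hxy hf'
      rwa [slope_def_field, div_le_iff₀ (sub_pos.2 hxy)] at this
    · simp
    · have := hf.le_slope_of_hasDerivWithinAt hy hx hyx hf'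
      rw [slope_def_field, le_div_iff₀ (sub_pos.2 hyx)] at this
      linarith

lemma isMaxOn_Ici_iff_perp (hf : ConcaveOn ℝ (Ici a) f) (hx : a ≤ x)
    (hf' : HasDerivWithinAt f f' (Ici a) x) : IsMaxOn f (Ici a) x ↔ perp (x - a) f' := by
  rw [isMaxOn_iff_forall_mul_sub_nonpos hf hx hf']
  constructor
  · intro hvar
    have hf'_nonpos : f' ≤ 0 := by simpa using hvar (x + 1) (hx.trans (by linarith))
    have hleft : f' * (a - x) ≤ 0 := hvar a self_mem_Ici
    have hxa : 0 ≤ x - a := sub_nonneg.2 hx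
    exact ⟨hxa, hf'_nonpos,
      le_antisymm (mul_nonpos_of_nonneg_of_nonpos hxa hf'_nonpos) (by linarith)⟩
  · rintro ⟨-, hf'_nonpos, hcompl⟩ y hy
    calc f' * (y - x) = (y - a) * f' - (x - a) * f' := by ring
      _ ≤ 0 := by
        rw [hcompl, sub_zero]
        exact mul_nonpos_of_nonneg_of_nonpos (sub_nonneg.2 hy) hf'_nonpos

lemma isMaxOn_Icc_iff_exists_perp (hf : ConcaveOn ℝ (Icc a b) f) (hx : x ∈ Icc a b)
    (hf' : HasDerivWithinAt f f' (Icc a b) x) :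
    IsMaxOn f (Icc a b) x ↔ ∃ κ : ℝ, perp (x - a) (f' - κ) ∧ perp κ (x - b) := by
  have hxa : 0 ≤ x - a := sub_nonneg.2 hx.1
  have hxb : x - b ≤ 0 := sub_nonpos.2 hx.2
  have hab : a ≤ b := hx.1.trans hx.2
  rw [isMaxOn_iff_forall_mul_sub_nonpos hf hx hf']
  constructor
  · intro hvar
    have hleft : f' * (a - x) ≤ 0 := hvar a (left_mem_Icc.2 hab)
    have hright : f' * (b - x) ≤ 0 := hvar b (right_mem_Icc.2 hab)
    rcases le_total f' 0 with hneg | hpos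
    · have hcompl : (x - a) * f' = 0 :=
        le_antisymm (mul_nonpos_of_nonneg_of_nonpos hxa hneg) (by linarith)
      exact ⟨0, ⟨hxa, by simpa using hneg, by simpa using hcompl⟩, le_rfl, hxb, zero_mul _⟩
    · have hcompl : f' * (x - b) = 0 :=
        le_antisymm (mul_nonpos_of_nonneg_of_nonpos hpos hxb) (by linarith)
      exact ⟨f', ⟨hxa, by simp, by simp⟩, hpos, hxb, hcompl⟩
  · rintro ⟨κ, ⟨-, hκ', hcompl_a⟩, hκ, -, hcompl_b⟩ y ⟨hya, hyb⟩
    calc f' * (y - x)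
        = (y - a) * (f' - κ) + κ * (y - b) - (x - a) * (f' - κ) - κ * (x - b) := by ring
      _ = (y - a) * (f' - κ) + κ * (y - b) := by rw [hcompl_a, hcompl_b]; ring
      _ ≤ 0 := add_nonpos (mul_nonpos_of_nonneg_of_nonpos (sub_nonneg.2 hya) hκ')
          (mul_nonpos_of_nonneg_of_nonpos hκ (sub_nonpos.2 hyb))

lemma isMaxOn_Ici_mul_iff_perp (c : ℝ) (hx : a ≤ x) :
    IsMaxOn (fun y ↦ c * y) (Ici a) x ↔ perp (x - a) c :=
  isMaxOn_Ici_iff_perp ((LinearMap.mul ℝ ℝ c).concaveOn (convex_Ici a)) hx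
    (hasDerivAt_const_mul c).hasDerivWithinAt

lemma antitone_sub_mul {c : ℝ} (hc : 0 ≤ c) (d : ℝ) : Antitone (fun m : ℝ ↦ d - c * m) :=
  fun _ _ h ↦ sub_le_sub_left (mul_le_mul_of_nonneg_left h hc) d

lemma concaveOn_integral_sub_mul (hf : Continuous f) (hanti : Antitone f) (hs : Convex ℝ s)
    (c δ : ℝ) : ConcaveOn ℝ s (fun l ↦ (∫ m in c..l, f m) - δ * l) := by
  have hderiv : ∀ l, HasDerivAt (fun l ↦ ∫ m in c..l, f m) (f l) l := fun l ↦
    (hf.integral_hasStrictDerivAt c l).hasDerivAt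
  have hconcave : ConcaveOn ℝ univ (fun l ↦ ∫ m in c..l, f m) :=
    Antitone.concaveOn_univ_of_deriv (fun l ↦ (hderiv l).differentiableAt)
      (by rwa [funext fun l ↦ (hderiv l).deriv])
  exact (hconcave.subset (subset_univ s) hs).sub ((LinearMap.mul ℝ ℝ δ).convexOn hs)

lemma isMaxOn_Ici_integral_sub_mul_iff_perp (hf : Continuous f) (hanti : Antitone f) (c δ : ℝ)
    (hx : a ≤ x) :
    IsMaxOn (fun l ↦ (∫ m in c..l, f m) - δ * l) (Ici a) x ↔ perp (x - a) (f x - δ) := by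
  refine isMaxOn_Ici_iff_perp (concaveOn_integral_sub_mul hf hanti (convex_Ici a) c δ) hx ?_
  exact ((hf.integral_hasStrictDerivAt c x).hasDerivAt.sub
    (hasDerivAt_const_mul δ)).hasDerivWithinAt

lemma concaveOn_mul_sub (hf : ConvexOn ℝ s f) (δ : ℝ) : ConcaveOn ℝ s (fun g ↦ δ * g - f g) :=
  ((LinearMap.mul ℝ ℝ δ).concaveOn hf.1).sub hf

lemma isMaxOn_Icc_mul_sub_iff_exists_perp (hf : ConvexOn ℝ (Icc a b) f) (hx : x ∈ Icc a b)
    (hf' : HasDerivWithinAt f f' (Icc a b) x) (δ : ℝ) :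
    IsMaxOn (fun g ↦ δ * g - f g) (Icc a b) x ↔
      ∃ κ : ℝ, perp (x - a) (δ - f' - κ) ∧ perp κ (x - b) := by
  refine isMaxOn_Icc_iff_exists_perp (concaveOn_mul_sub hf δ) hx ?_
  exact (hasDerivAt_const_mul δ).hasDerivWithinAt.sub hf'

end OneVariable

section Prosumer

/-- The bounds on the decision `(l, g, zs, zb)`, without the energy balance. -/
def prosumerBox (G : ℝ) : Set (ℝ × ℝ × ℝ × ℝ) :=
  Ici 0 ×ˢ Icc 0 G ×ˢ Ici 0 ×ˢ Ici 0

/-- The net demand `l + zs - zb - g` of the decision `(l, g, zs, zb)`, which the energy balance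
equates with the renewable output. -/
def netDemand : ℝ × ℝ × ℝ × ℝ →ₗ[ℝ] ℝ where
  toFun x := x.1 + x.2.2.1 - x.2.2.2 - x.2.1
  map_add' x y := by simp only [Prod.fst_add, Prod.snd_add]; ring
  map_smul' c x := by simp only [Prod.smul_fst, Prod.smul_snd, smul_eq_mul, RingHom.id_apply]; ring

lemma netDemand_apply (x : ℝ × ℝ × ℝ × ℝ) :
    netDemand x = x.1 + x.2.2.1 - x.2.2.2 - x.2.1 := rfl

lemma mem_Xpro_iff {R G : ℝ} {x : ℝ × ℝ × ℝ × ℝ} :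
    x ∈ Xpro R G ↔ x ∈ prosumerBox G ∧ netDemand x = R := by
  simp only [Xpro, prosumerBox, netDemand_apply, mem_ofPred_eq, mem_prod, mem_Ici, mem_Icc,
    sub_eq_zero]
  tauto

lemma exists_mem_prosumerBox_netDemand_lt {G : ℝ} {x : ℝ × ℝ × ℝ × ℝ} (hx : x ∈ prosumerBox G) :
    ∃ y ∈ prosumerBox G, netDemand y < netDemand x := by
  obtain ⟨hl, hg, hs, hb⟩ := hx
  refine ⟨(x.1, x.2.1, x.2.2.1, x.2.2.2 + 1),
    ⟨hl, hg, hs, mem_Ici.2 (add_nonneg hb zero_le_one)⟩, ?_⟩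
  simp only [netDemand_apply]
  linarith

lemma exists_mem_prosumerBox_lt_netDemand {G : ℝ} {x : ℝ × ℝ × ℝ × ℝ} (hx : x ∈ prosumerBox G) :
    ∃ y ∈ prosumerBox G, netDemand x < netDemand y := by
  refine ⟨(x.1 + 1, x.2), ⟨mem_Ici.2 (add_nonneg hx.1 zero_le_one), hx.2⟩, ?_⟩
  simp only [netDemand_apply]
  linarith

variable {P0 Q0 α G p τs τb φ : ℝ} {C : ℝ → ℝ} {x : ℝ × ℝ × ℝ × ℝ}

lemma fpro_sub_mul_netDemand (δ : ℝ) (y : ℝ × ℝ × ℝ × ℝ) :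
    fpro P0 Q0 α p τs τb φ C y - δ * netDemand y =
      ((∫ m in (0 : ℝ)..y.1, (P0 - P0 / (α * Q0) * m)) - δ * y.1) +
        ((δ * y.2.1 - C y.2.1) +
          ((p + τs - δ) * y.2.2.1 + (-(p + τb) + δ) * y.2.2.2)) - φ := by
  simp only [fpro, netDemand_apply]
  ring

lemma concaveOn_fpro_sub_mul_netDemand (hslope : 0 ≤ P0 / (α * Q0)) (hC : ConvexOn ℝ (Icc 0 G) C)
    (δ : ℝ) :
    ConcaveOn ℝ (prosumerBox G) (fun y ↦ fpro P0 Q0 α p τs τb φ C y - δ * netDemand y) := by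
  have hIci : Convex ℝ (Ici (0 : ℝ)) := convex_Ici 0
  have hseparate := concaveOn_prod_add
    (concaveOn_integral_sub_mul (by fun_prop) (antitone_sub_mul hslope P0) hIci 0 δ)
    (concaveOn_prod_add (concaveOn_mul_sub hC δ)
      (concaveOn_prod_add ((LinearMap.mul ℝ ℝ (p + τs - δ)).concaveOn hIci)
        ((LinearMap.mul ℝ ℝ (-(p + τb) + δ)).concaveOn hIci)))
  exact (hseparate.sub (convexOn_const φ hseparate.1)).congr
    fun y _ ↦ (fpro_sub_mul_netDemand δ y).symm

lemma isMaxOn_fpro_sub_mul_netDemand_iff_exists_perp (hslope : 0 ≤ P0 / (α * Q0))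
    (hC : ConvexOn ℝ (Icc 0 G) C) (hx : x ∈ prosumerBox G) (hC' : DifferentiableAt ℝ C x.2.1)
    (δ : ℝ) :
    IsMaxOn (fun y ↦ fpro P0 Q0 α p τs τb φ C y - δ * netDemand y) (prosumerBox G) x ↔
      ∃ κ : ℝ, 0 ≤ κ ∧
        perp x.1 (P0 - (P0 / (α * Q0)) * x.1 - δ) ∧
        perp x.2.1 (-(deriv C x.2.1) + δ - κ) ∧
        perp κ (x.2.1 - G) ∧
        perp x.2.2.1 ((p + τs) - δ) ∧
        perp x.2.2.2 (-(p + τb) + δ) := by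
  have hseparate := (isMaxOn_prod_add_iff hx).trans (and_congr
    (isMaxOn_Ici_integral_sub_mul_iff_perp (by fun_prop) (antitone_sub_mul hslope P0) 0 δ hx.1)
    ((isMaxOn_prod_add_iff hx.2).trans (and_congr
      (isMaxOn_Icc_mul_sub_iff_exists_perp hC hx.2.1 hC'.hasDerivAt.hasDerivWithinAt δ)
      ((isMaxOn_prod_add_iff hx.2.2).trans (and_congr
        (isMaxOn_Ici_mul_iff_perp (p + τs - δ) hx.2.2.1)
        (isMaxOn_Ici_mul_iff_perp (-(p + τb) + δ) hx.2.2.2))))))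
  simp only [isMaxOn_iff, sub_zero, ← neg_add_eq_sub (deriv C x.2.1)] at hseparate
  simp only [isMaxOn_iff, fpro_sub_mul_netDemand, sub_le_sub_iff_right]
  refine hseparate.trans ⟨?_, ?_⟩
  · rintro ⟨hl, ⟨κ, hg, hκ⟩, hs, hb⟩
    exact ⟨κ, hκ.1, hl, hg, hκ, hs, hb⟩
  · rintro ⟨κ, -, hl, hg, hκ, hs, hb⟩
    exact ⟨hl, ⟨κ, hg, hκ⟩, hs, hb⟩

end Prosumer

theorem prosumer_KKT_iff_optimal_general
    (P0 Q0 α R G p τs τb φ : ℝ) (hslope : 0 < P0 / (α * Q0))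
    (C : ℝ → ℝ) (hCconv : ConvexOn ℝ (Icc 0 G) C)
    (x : ℝ × ℝ × ℝ × ℝ) (hx : x ∈ Xpro R G) (hC : DifferentiableAt ℝ C x.2.1) :
    (∀ y ∈ Xpro R G, fpro P0 Q0 α p τs τb φ C y ≤ fpro P0 Q0 α p τs τb φ C x) ↔
    ∃ δ κ : ℝ, 0 ≤ κ ∧
      perp x.1 (P0 - (P0 / (α * Q0)) * x.1 - δ) ∧
      perp x.2.1 (-(deriv C x.2.1) + δ - κ) ∧
      perp κ (x.2.1 - G) ∧
      perp x.2.2.1 ((p + τs) - δ) ∧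
      perp x.2.2.2 (-(p + τb) + δ) := by
  obtain ⟨hbox, rfl⟩ := mem_Xpro_iff.1 hx
  have hXpro : Xpro (netDemand x) G = {y ∈ prosumerBox G | netDemand y = netDemand x} :=
    ext fun _ ↦ mem_Xpro_iff
  have hconcave : ConcaveOn ℝ (prosumerBox G) (fpro P0 Q0 α p τs τb φ C) := by
    simpa using concaveOn_fpro_sub_mul_netDemand hslope.le hCconv 0
  rw [hXpro, ← isMaxOn_iff, isMaxOn_level_iff_exists_multiplier hconcave
    (exists_mem_prosumerBox_netDemand_lt hbox) (exists_mem_prosumerBox_lt_netDemand hbox)]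
  exact exists_congr fun δ ↦
    isMaxOn_fpro_sub_mul_netDemand_iff_exists_perp hslope.le hCconv hbox hC δ

/-- (KKT conditions are necessary and sufficient for the prosumer's problem.)
`x = (l, g, zs, zb) ∈ Xpro` is optimal iff there exist `δ ∈ ℝ` and `κ ≥ 0` satisfying the
complementarity system. -/
theorem prosumer_KKT_iff_optimal
    (P0 Q0 α R G p τs τb φ : ℝ)
    (hP0 : 0 < P0) (hQ0 : 0 < Q0) (hα0 : 0 < α) (hα1 : α < 1)
    (hR : 0 < R) (hG : 0 ≤ G) (hp : 0 ≤ p)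
    (C : ℝ → ℝ) (hC : ContDiff ℝ 1 C) (hCconv : ConvexOn ℝ Set.univ C)
    (x : ℝ × ℝ × ℝ × ℝ) (hx : x ∈ Xpro R G) :
    (∀ y ∈ Xpro R G, fpro P0 Q0 α p τs τb φ C y ≤ fpro P0 Q0 α p τs τb φ C x) ↔
    ∃ δ κ : ℝ, 0 ≤ κ ∧
      perp x.1 (P0 - (P0 / (α * Q0)) * x.1 - δ) ∧
      perp x.2.1 (-(deriv C x.2.1) + δ - κ) ∧
      perp κ (x.2.1 - G) ∧
      perp x.2.2.1 ((p + τs) - δ) ∧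
      perp x.2.2.2 (-(p + τb) + δ) := by
  exact prosumer_KKT_iff_optimal_general P0 Q0 α R G p τs τb φ (by positivity) C
    (hCconv.subset (subset_univ _) (convex_Icc 0 G)) x hx (hC.differentiable one_ne_zero _)
end

section
/- (Lemma 2: existence and partial uniqueness for the lower-level planner problem.) For any (τb, τs) with τb ≥ 0 and τs ≤ τb, the problem of maximizing Π(·; τb, τs) over X has an optimal solution. Moreover, any two optimal solutions have the same vectors d, l, g (backup generation), the same plant outputs g_{ih}, and the same net-sale quantities zs_i − zb_i for every node i. -/
/-- A lower-level decision vector `x = (d, l, zs, zb, g, (g_{ih}), y)`. -/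
structure LVec (N : ℕ) (H : Fin N → Type) where
  d : Fin N → ℝ
  l : Fin N → ℝ
  zs : Fin N → ℝ
  zb : Fin N → ℝ
  g : Fin N → ℝ
  gih : (i : Fin N) → H i → ℝ
  y : Fin N → ℝ

/-- The lower-level feasible set `X`. -/
def FeasX {N K : ℕ} {H : Fin N → Type} [∀ i, Fintype (H i)]
    (R Gp : Fin N → ℝ) (Gcap : (i : Fin N) → H i → ℝ)
    (T : Fin K → ℝ) (PTDF : Fin K → Fin N → ℝ) (x : LVec N H) : Prop :=
  (∀ i, 0 ≤ x.d i) ∧ (∀ i, 0 ≤ x.l i) ∧ (∀ i, 0 ≤ x.zs i) ∧ (∀ i, 0 ≤ x.zb i) ∧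
  (∀ i, 0 ≤ x.g i) ∧ (∀ i (h : H i), 0 ≤ x.gih i h) ∧
  (∀ i, x.l i + x.zs i - x.zb i - x.g i - R i = 0) ∧
  (∀ i, x.g i ≤ Gp i) ∧
  (∀ i (h : H i), x.gih i h ≤ Gcap i h) ∧
  (∑ i, x.y i = 0) ∧
  (∀ k, -T k ≤ ∑ i, PTDF k i * x.y i ∧ ∑ i, PTDF k i * x.y i ≤ T k) ∧
  (∀ i, x.y i - (∑ h, x.gih i h) - (x.zs i - x.zb i) + x.d i = 0)

/-- The social surplus `Π(x; τb, τs)`. -/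
noncomputable def surplus {N : ℕ} {H : Fin N → Type} [∀ i, Fintype (H i)]
    (P0 Q0 α : Fin N → ℝ) (Cg : Fin N → ℝ → ℝ) (a A : (i : Fin N) → H i → ℝ)
    (τb τs : ℝ) (x : LVec N H) : ℝ :=
  (∑ i, ((∫ m in (0:ℝ)..x.d i, (P0 i - (P0 i / ((1 - α i) * Q0 i)) * m)) - τb * x.d i))
  + (∑ i, (τs * x.zs i - τb * x.zb i
      + (∫ m in (0:ℝ)..x.l i, (P0 i - (P0 i / (α i * Q0 i)) * m)) - Cg i (x.g i)))
  - ∑ i, ∑ h, (a i h * x.gih i h + (1 / 2) * A i h * (x.gih i h) ^ 2)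

/-- The optimal value function `V(τb, τs)` (as a real-valued supremum). -/
noncomputable def Vval {N K : ℕ} {H : Fin N → Type} [∀ i, Fintype (H i)]
    (P0 Q0 α : Fin N → ℝ) (Cg : Fin N → ℝ → ℝ) (a A Gcap : (i : Fin N) → H i → ℝ)
    (R Gp : Fin N → ℝ) (T : Fin K → ℝ) (PTDF : Fin K → Fin N → ℝ)
    (τ : ℝ × ℝ) : ℝ :=
  sSup ((fun x => surplus P0 Q0 α Cg a A τ.1 τ.2 x) ''
    {x : LVec N H | FeasX R Gp Gcap T PTDF x})

/-- The rate set `𝒯`. -/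
def Tset (τhat τlow : ℝ) : Set (ℝ × ℝ) :=
  {τ | 0 ≤ τ.1 ∧ τ.1 ≤ τhat ∧ τlow ≤ τ.2 ∧ τ.2 ≤ τ.1}

/-!
A feasible point is determined, up to simultaneous buying and selling at a node, by its dispatch
`v = (d, l, g, (g_{ih}))`: the balance equations give the net sale `n_i = g_i + R_i - l_i` and the
injection `y_i`. Since `τs ≤ τb`, the best way of trading `n_i` is `zs_i = n_i⁺`, `zb_i = n_i⁻`, and
it earns `min (τs * n_i) (τb * n_i)`, which is concave in the dispatch. Maximizing the surplus
therefore amounts to maximizing a strictly concave function of the dispatch, continuous because the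
dispatches form a finite-dimensional space, over a compact convex set.
-/

open Set

section StrictConcavity

variable {ι 𝕜 E F β : Type*} [Semiring 𝕜] [PartialOrder 𝕜] [AddCommMonoid E] [AddCommMonoid F]
  [AddCommMonoid β] [PartialOrder β] [IsOrderedCancelAddMonoid β]
  [Module 𝕜 E] [Module 𝕜 F] [Module 𝕜 β]

theorem strictConcaveOn_prod_add {s : Set E} {t : Set F} {f : E → β} {g : F → β}
    (hf : StrictConcaveOn 𝕜 s f) (hg : StrictConcaveOn 𝕜 t g) :
    StrictConcaveOn 𝕜 (s ×ˢ t) fun p => f p.1 + g p.2 := by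
  refine ⟨hf.1.prod hg.1, fun p hp q hq hpq a b ha hb hab => ?_⟩
  have hf_le := hf.concaveOn.2 hp.1 hq.1 ha.le hb.le hab
  have hg_le := hg.concaveOn.2 hp.2 hq.2 ha.le hb.le hab
  rw [smul_add, smul_add, add_add_add_comm]
  by_cases hfst : p.1 = q.1
  · have hsnd : p.2 ≠ q.2 := fun h => hpq (Prod.ext hfst h)
    exact add_lt_add_of_le_of_lt hf_le (hg.2 hp.2 hq.2 hsnd ha hb hab)
  · exact add_lt_add_of_lt_of_le (hf.2 hp.1 hq.1 hfst ha hb hab) hg_le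

theorem strictConcaveOn_pi_sum [Fintype ι] {M : ι → Type*} [∀ i, AddCommMonoid (M i)]
    [∀ i, Module 𝕜 (M i)] {s : ∀ i, Set (M i)} {f : ∀ i, M i → β}
    (hf : ∀ i, StrictConcaveOn 𝕜 (s i) (f i)) :
    StrictConcaveOn 𝕜 (univ.pi s) fun v => ∑ i, f i (v i) := by
  refine ⟨convex_pi fun i _ => (hf i).1, fun v hv w hw hvw a b ha hb hab => ?_⟩
  obtain ⟨j, hj⟩ := Function.ne_iff.1 hvw
  rw [Finset.smul_sum, Finset.smul_sum, ← Finset.sum_add_distrib]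
  exact Finset.sum_lt_sum
    (fun i _ => (hf i).concaveOn.2 (hv i trivial) (hw i trivial) ha.le hb.le hab)
    ⟨j, Finset.mem_univ j, (hf j).2 (hv j trivial) (hw j trivial) hj ha hb hab⟩

end StrictConcavity

theorem strictConcaveOn_linear_sub_quadratic (b : ℝ) {c : ℝ} (hc : 0 < c) :
    StrictConcaveOn ℝ univ fun q : ℝ => b * q - c * q ^ 2 := by
  refine ⟨convex_univ, fun x _ y _ hxy s t hs ht hst => ?_⟩
  obtain rfl : t = 1 - s := by linarith
  have hgap : 0 < c * (s * (1 - s)) * (x - y) ^ 2 :=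
    mul_pos (mul_pos hc (mul_pos hs ht)) (sq_pos_of_ne_zero (sub_ne_zero.2 hxy))
  simp only [smul_eq_mul]
  linarith

theorem integral_sub_const_mul (p k q : ℝ) :
    ∫ m in (0 : ℝ)..q, (p - k * m) = p * q - k / 2 * q ^ 2 := by
  rw [intervalIntegral.integral_sub (by simp) (Continuous.intervalIntegrable (by fun_prop) _ _),
    intervalIntegral.integral_const_mul, intervalIntegral.integral_const, integral_id, smul_eq_mul]
  ring

theorem strictConcaveOn_integral_sub_const_mul (p : ℝ) {k : ℝ} (hk : 0 < k) :
    StrictConcaveOn ℝ univ fun q : ℝ => ∫ m in (0 : ℝ)..q, (p - k * m) := by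
  simpa only [integral_sub_const_mul] using strictConcaveOn_linear_sub_quadratic p (half_pos hk)

theorem existsUnique_isMaxOn_of_strictConcaveOn {E : Type*} [AddCommMonoid E] [Module ℝ E]
    [TopologicalSpace E] {S : Set E} (hS : IsCompact S) (hne : S.Nonempty) {f : E → ℝ}
    (hcont : ContinuousOn f S) (hf : StrictConcaveOn ℝ S f) :
    ∃! v, v ∈ S ∧ IsMaxOn f S v := by
  obtain ⟨v, hvS, hv⟩ := hS.exists_isMaxOn hne hcont
  exact ⟨v, ⟨hvS, hv⟩, fun w ⟨hwS, hw⟩ => hf.eq_of_isMaxOn hw hv hwS hvS⟩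

section Trade

variable {τb τs : ℝ}

theorem sell_sub_buy_le_min (hτ : τs ≤ τb) {s b : ℝ} (hs : 0 ≤ s) (hb : 0 ≤ b) :
    τs * s - τb * b ≤ min (τs * (s - b)) (τb * (s - b)) := by
  have hsell : τs * s ≤ τb * s := mul_le_mul_of_nonneg_right hτ hs
  have hbuy : τs * b ≤ τb * b := mul_le_mul_of_nonneg_right hτ hb
  exact le_min (by linarith) (by linarith)

theorem sell_posPart_sub_buy_negPart (hτ : τs ≤ τb) (n : ℝ) :
    τs * n⁺ - τb * n⁻ = min (τs * n) (τb * n) := by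
  rcases le_total 0 n with hn | hn
  · rw [posPart_of_nonneg hn, negPart_of_nonneg hn,
      min_eq_left (mul_le_mul_of_nonneg_right hτ hn)]
    ring
  · rw [posPart_of_nonpos hn, negPart_of_nonpos hn,
      min_eq_right (mul_le_mul_of_nonpos_right hτ hn)]
    ring

end Trade

/-- The decisions `(d, l, g, (g_h))` at a single node, with plants indexed by `η`. It is a plain
product, so that it inherits the order, the topology and the vector space structure. -/
abbrev NodeDispatch (η : Type*) := ℝ × ℝ × ℝ × (η → ℝ)

namespace NodeDispatch

variable {η : Type*}

/-- The demand `d` served from the network. -/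
abbrev d (v : NodeDispatch η) : ℝ := v.1

/-- The demand `l` served from renewable output, backup generation and trade. -/
abbrev l (v : NodeDispatch η) : ℝ := v.2.1

/-- The backup generation `g`. -/
abbrev g (v : NodeDispatch η) : ℝ := v.2.2.1

/-- The plant outputs `g_h`. -/
abbrev gih (v : NodeDispatch η) : η → ℝ := v.2.2.2

/-- The net sale `zs - zb` forced by the balance equation at a node with renewable output `R`. -/
def netSale (R : ℝ) (v : NodeDispatch η) : ℝ := v.g + R - v.l

/-- The injection `y` forced by the balance equation at a node with renewable output `R`. -/
def netInjection [Fintype η] (R : ℝ) (v : NodeDispatch η) : ℝ :=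
  ∑ h, v.gih h + v.netSale R - v.d

/-- The surplus of a node whose inverse demands are `m ↦ p - kd * m` and `m ↦ p - kl * m`, when its
net sale `n` is traded optimally, that is, for a revenue `min (τs * n) (τb * n)`. -/
noncomputable def nodeSurplus [Fintype η] (p kd kl R : ℝ) (Cg : ℝ → ℝ) (a A : η → ℝ) (τb τs : ℝ)
    (v : NodeDispatch η) : ℝ :=
  (∫ m in (0 : ℝ)..v.d, (p - kd * m)) + (∫ m in (0 : ℝ)..v.l, (p - kl * m)) - Cg v.g
    - ∑ h, (a h * v.gih h + (1 / 2) * A h * v.gih h ^ 2)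
    + (min (τs * v.netSale R) (τb * v.netSale R) - τb * v.d)

theorem netSale_smul_add_smul (R : ℝ) (v w : NodeDispatch η) {s t : ℝ} (hst : s + t = 1) :
    (s • v + t • w).netSale R = s * v.netSale R + t * w.netSale R := by
  simp only [netSale, g, l, Prod.fst_add, Prod.snd_add, Prod.smul_fst, Prod.smul_snd, smul_eq_mul]
  linear_combination -R * hst

theorem netInjection_smul_add_smul [Fintype η] (R : ℝ) (v w : NodeDispatch η) {s t : ℝ}
    (hst : s + t = 1) :
    (s • v + t • w).netInjection R = s * v.netInjection R + t * w.netInjection R := by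
  simp only [netInjection, netSale_smul_add_smul R v w hst, d, gih, Prod.fst_add, Prod.snd_add,
    Prod.smul_fst, Prod.smul_snd, Pi.add_apply, Pi.smul_apply, smul_eq_mul,
    Finset.sum_add_distrib, ← Finset.mul_sum]
  ring

theorem continuous_netInjection [Fintype η] (R : ℝ) :
    Continuous (netInjection R : NodeDispatch η → ℝ) := by
  unfold netInjection netSale
  fun_prop

theorem concaveOn_tradeRevenue (R τb τs : ℝ) : ConcaveOn ℝ univ fun v : NodeDispatch η =>
    min (τs * v.netSale R) (τb * v.netSale R) - τb * v.d := by
  have hnet (τ : ℝ) : ConcaveOn ℝ univ fun v : NodeDispatch η => τ * v.netSale R := by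
    refine ⟨convex_univ, fun v _ w _ s t _ _ hst => le_of_eq ?_⟩
    simp only [netSale_smul_add_smul R v w hst, smul_eq_mul]
    ring
  exact ((hnet τs).inf (hnet τb)).sub
    ((τb • LinearMap.fst ℝ ℝ (ℝ × ℝ × (η → ℝ))).convexOn convex_univ)

theorem strictConcaveOn_nodeSurplus [Fintype η] {p kd kl R τb τs : ℝ} {Cg : ℝ → ℝ}
    {a A : η → ℝ} (hkd : 0 < kd) (hkl : 0 < kl) (hCg : StrictConvexOn ℝ univ Cg)
    (hA : ∀ h, 0 < A h) : StrictConcaveOn ℝ univ (nodeSurplus p kd kl R Cg a A τb τs) := by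
  have hplants : StrictConcaveOn ℝ univ fun q : η → ℝ =>
      ∑ h, (-a h * q h - A h / 2 * q h ^ 2) := by
    simpa only [pi_univ] using strictConcaveOn_pi_sum fun h =>
      strictConcaveOn_linear_sub_quadratic (-a h) (half_pos (hA h))
  have hsep := strictConcaveOn_prod_add (strictConcaveOn_integral_sub_const_mul p hkd)
    (strictConcaveOn_prod_add (strictConcaveOn_integral_sub_const_mul p hkl)
      (strictConcaveOn_prod_add hCg.neg hplants))
  simp only [univ_prod_univ] at hsep
  refine (hsep.add_concaveOn (concaveOn_tradeRevenue R τb τs)).congr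
    fun (v : NodeDispatch η) _ => ?_
  have hcost : ∑ h, (a h * v.gih h + (1 / 2) * A h * v.gih h ^ 2) =
      -∑ h, (-a h * v.gih h - A h / 2 * v.gih h ^ 2) := by
    rw [← Finset.sum_neg_distrib]
    exact Finset.sum_congr rfl fun h _ => by ring
  simp only [nodeSurplus, Pi.add_apply, Pi.neg_apply, hcost]
  ring

end NodeDispatch

open NodeDispatch

section DispatchSet

variable {ι κ : Type*} [Fintype ι]

/-- The balanced injections that respect the line limits. -/
def networkSet (T : κ → ℝ) (PTDF : κ → ι → ℝ) : Set (ι → ℝ) :=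
  {y | ∑ i, y i = 0 ∧ ∀ k, -T k ≤ ∑ i, PTDF k i * y i ∧ ∑ i, PTDF k i * y i ≤ T k}

theorem convex_networkSet (T : κ → ℝ) (PTDF : κ → ι → ℝ) : Convex ℝ (networkSet T PTDF) := by
  intro y hy z hz s t hs ht hst
  have hlin (c : ι → ℝ) : ∑ i, c i * (s • y + t • z) i =
      s * ∑ i, c i * y i + t * ∑ i, c i * z i := by
    simp only [Finset.mul_sum, ← Finset.sum_add_distrib, Pi.add_apply, Pi.smul_apply, smul_eq_mul]
    exact Finset.sum_congr rfl fun i _ => by ring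
  refine ⟨?_, fun k => ?_⟩
  · simpa [hy.1, hz.1] using hlin 1
  · rw [hlin]
    exact convex_Icc (-T k) (T k) (hy.2 k) (hz.2 k) hs ht hst

theorem isClosed_networkSet (T : κ → ℝ) (PTDF : κ → ι → ℝ) : IsClosed (networkSet T PTDF) := by
  simp only [networkSet, ofPred_and, ofPred_forall]
  exact (isClosed_eq (by fun_prop) continuous_const).inter <| isClosed_iInter fun k =>
    (isClosed_le continuous_const (by fun_prop)).inter (isClosed_le (by fun_prop) continuous_const)

variable {η : ι → Type*} [∀ i, Fintype (η i)]
  {R Gp : ι → ℝ} {Gcap : ∀ i, η i → ℝ} {T : κ → ℝ} {PTDF : κ → ι → ℝ}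

/-- The dispatches of the feasible points: the projection of `X` that forgets `zs`, `zb`, `y`. -/
def dispatchSet (R Gp : ι → ℝ) (Gcap : ∀ i, η i → ℝ) (T : κ → ℝ) (PTDF : κ → ι → ℝ) :
    Set (∀ i, NodeDispatch (η i)) :=
  {v | 0 ≤ v ∧ (∀ i, (v i).g ≤ Gp i) ∧ (∀ i, (v i).gih ≤ Gcap i) ∧
    (fun i => (v i).netInjection (R i)) ∈ networkSet T PTDF}

theorem convex_dispatchSet : Convex ℝ (dispatchSet R Gp Gcap T PTDF) := by
  rintro v ⟨hv, hvg, hvq, hvy⟩ w ⟨hw, hwg, hwq, hwy⟩ s t hs ht hst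
  refine ⟨convex_Ici (𝕜 := ℝ) (0 : ∀ i, NodeDispatch (η i)) hv hw hs ht hst,
    fun i => convex_Iic (Gp i) (hvg i) (hwg i) hs ht hst,
    fun i => convex_Iic (Gcap i) (hvq i) (hwq i) hs ht hst, ?_⟩
  convert convex_networkSet T PTDF hvy hwy hs ht hst using 1
  exact funext fun i => netInjection_smul_add_smul (R i) (v i) (w i) hst

theorem isClosed_dispatchSet : IsClosed (dispatchSet R Gp Gcap T PTDF) := by
  simp only [dispatchSet, ofPred_and, ofPred_forall]
  refine isClosed_Ici.inter <| (isClosed_iInter fun i => ?_).inter <|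
    (isClosed_iInter fun i => ?_).inter <| (isClosed_networkSet T PTDF).preimage ?_
  · exact isClosed_le (by fun_prop) continuous_const
  · exact isClosed_le (by fun_prop) continuous_const
  · exact continuous_pi fun i => (continuous_netInjection (R i)).comp (continuous_apply i)

theorem demand_le_total_capacity {v : ∀ i, NodeDispatch (η i)}
    (hv : v ∈ dispatchSet R Gp Gcap T PTDF) (i : ι) :
    (v i).d + (v i).l ≤ ∑ j, (∑ h, Gcap j h + Gp j + R j) := by
  obtain ⟨hnonneg, hg, hq, hbalanced, -⟩ := hv
  calc (v i).d + (v i).l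
      ≤ ∑ j, ((v j).d + (v j).l) :=
        Finset.single_le_sum (f := fun j => (v j).d + (v j).l)
          (fun j _ => add_nonneg (hnonneg j).1 (hnonneg j).2.1) (Finset.mem_univ i)
    _ = ∑ j, (∑ h, (v j).gih h + (v j).g + R j) - ∑ j, (v j).netInjection (R j) := by
        rw [← Finset.sum_sub_distrib]
        exact Finset.sum_congr rfl fun j _ => by simp only [netInjection, netSale]; ring
    _ = ∑ j, (∑ h, (v j).gih h + (v j).g + R j) := by rw [hbalanced, sub_zero]
    _ ≤ ∑ j, (∑ h, Gcap j h + Gp j + R j) := by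
        gcongr with j _ h _
        exacts [hq j h, hg j]

theorem isCompact_dispatchSet : IsCompact (dispatchSet R Gp Gcap T PTDF) := by
  set B : ℝ := ∑ j, (∑ h, Gcap j h + Gp j + R j)
  refine (isCompact_Icc (a := 0) (b := fun i => (B, B, Gp i, Gcap i))).of_isClosed_subset
    isClosed_dispatchSet fun (v : ∀ i, NodeDispatch (η i)) hv => ⟨hv.1, fun i => ?_⟩
  have hd : 0 ≤ (v i).d := (hv.1 i).1
  have hl : 0 ≤ (v i).l := (hv.1 i).2.1
  have hdl : (v i).d + (v i).l ≤ B := demand_le_total_capacity hv i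
  exact ⟨by linarith, by linarith, hv.2.1 i, hv.2.2.1 i⟩

theorem dispatchSet_nonempty (hR : ∀ i, 0 ≤ R i) (hGp : ∀ i, 0 ≤ Gp i)
    (hGcap : ∀ i h, 0 ≤ Gcap i h) (hT : ∀ k, 0 ≤ T k) :
    (dispatchSet R Gp Gcap T PTDF).Nonempty := by
  refine ⟨fun i => (0, R i, 0, 0), fun i => ⟨le_rfl, hR i, le_rfl, le_rfl⟩, hGp, hGcap, ?_⟩
  simpa [networkSet, netInjection, netSale, gih] using hT

end DispatchSet

section Reduction

variable {N K : ℕ} {H : Fin N → Type} [∀ i, Fintype (H i)]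
  {P0 Q0 α R Gp : Fin N → ℝ} {Cg : Fin N → ℝ → ℝ} {a A Gcap : (i : Fin N) → H i → ℝ}
  {T : Fin K → ℝ} {PTDF : Fin K → Fin N → ℝ} {τb τs : ℝ} {x : LVec N H}
  {v : ∀ i, NodeDispatch (H i)}

/-- The dispatch part `(d, l, g, (g_{ih}))` of a decision vector. -/
def LVec.dispatch (x : LVec N H) : ∀ i, NodeDispatch (H i) :=
  fun i => (x.d i, x.l i, x.g i, x.gih i)

/-- The decision vector with dispatch `v` that never buys and sells at the same node. -/
def LVec.ofDispatch (R : Fin N → ℝ) (v : ∀ i, NodeDispatch (H i)) : LVec N H where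
  d i := (v i).d
  l i := (v i).l
  zs i := ((v i).netSale (R i))⁺
  zb i := ((v i).netSale (R i))⁻
  g i := (v i).g
  gih i := (v i).gih
  y i := (v i).netInjection (R i)

/-- The surplus as a function of the dispatch, all net sales being traded optimally. -/
noncomputable def dispatchSurplus (P0 Q0 α R : Fin N → ℝ) (Cg : Fin N → ℝ → ℝ)
    (a A : (i : Fin N) → H i → ℝ) (τb τs : ℝ) (v : ∀ i, NodeDispatch (H i)) : ℝ :=
  ∑ i, nodeSurplus (P0 i) (P0 i / ((1 - α i) * Q0 i)) (P0 i / (α i * Q0 i)) (R i) (Cg i) (a i)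
    (A i) τb τs (v i)

theorem strictConcaveOn_dispatchSurplus (hP0 : ∀ i, 0 < P0 i) (hQ0 : ∀ i, 0 < Q0 i)
    (hα0 : ∀ i, 0 < α i) (hα1 : ∀ i, α i < 1) (hCg : ∀ i, StrictConvexOn ℝ univ (Cg i))
    (hA : ∀ i h, 0 < A i h) :
    StrictConcaveOn ℝ univ (dispatchSurplus P0 Q0 α R Cg a A τb τs) := by
  unfold dispatchSurplus
  simpa only [pi_univ] using strictConcaveOn_pi_sum fun i => strictConcaveOn_nodeSurplus
    (div_pos (hP0 i) (mul_pos (sub_pos.2 (hα1 i)) (hQ0 i)))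
    (div_pos (hP0 i) (mul_pos (hα0 i) (hQ0 i))) (hCg i) (hA i)

theorem surplus_eq_dispatchSurplus_add (R : Fin N → ℝ) (x : LVec N H) :
    surplus P0 Q0 α Cg a A τb τs x = dispatchSurplus P0 Q0 α R Cg a A τb τs x.dispatch +
      ∑ i, (τs * x.zs i - τb * x.zb i -
        min (τs * (x.dispatch i).netSale (R i)) (τb * (x.dispatch i).netSale (R i))) := by
  unfold surplus dispatchSurplus
  rw [← Finset.sum_add_distrib, ← Finset.sum_sub_distrib, ← Finset.sum_add_distrib]
  refine Finset.sum_congr rfl fun i _ => ?_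
  simp only [nodeSurplus, LVec.dispatch]
  ring

theorem FeasX.sub_eq_netSale (hx : FeasX R Gp Gcap T PTDF x) (i : Fin N) :
    x.zs i - x.zb i = (x.dispatch i).netSale (R i) := by
  obtain ⟨-, -, -, -, -, -, hbalance, -⟩ := hx
  simp only [netSale, LVec.dispatch]
  linarith [hbalance i]

theorem FeasX.y_eq_netInjection (hx : FeasX R Gp Gcap T PTDF x) :
    x.y = fun i => (x.dispatch i).netInjection (R i) := by
  funext i
  rw [netInjection, ← hx.sub_eq_netSale i]
  obtain ⟨-, -, -, -, -, -, -, -, -, -, -, hinjection⟩ := hx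
  simp only [LVec.dispatch]
  linarith [hinjection i]

theorem FeasX.dispatch_mem (hx : FeasX R Gp Gcap T PTDF x) :
    x.dispatch ∈ dispatchSet R Gp Gcap T PTDF := by
  have hy := hx.y_eq_netInjection
  obtain ⟨hd, hl, -, -, hg, hgih, -, hg_le, hgih_le, hsum, hflow, -⟩ := hx
  exact ⟨fun i => ⟨hd i, hl i, hg i, hgih i⟩, hg_le, hgih_le, hy ▸ ⟨hsum, hflow⟩⟩

theorem feasX_ofDispatch (hv : v ∈ dispatchSet R Gp Gcap T PTDF) :
    FeasX R Gp Gcap T PTDF (LVec.ofDispatch R v) := by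
  obtain ⟨hnonneg, hg, hgih, hsum, hflow⟩ := hv
  have hnet (i : Fin N) := posPart_sub_negPart ((v i).netSale (R i))
  have hbalance (i : Fin N) : (v i).netSale (R i) = (v i).g + R i - (v i).l := rfl
  refine ⟨fun i => (hnonneg i).1, fun i => (hnonneg i).2.1, fun i => posPart_nonneg _,
    fun i => negPart_nonneg _, fun i => (hnonneg i).2.2.1, fun i => (hnonneg i).2.2.2,
    fun i => ?_, hg, hgih, hsum, hflow, fun i => ?_⟩
  · simp only [LVec.ofDispatch]
    linarith [hnet i, hbalance i]
  · simp only [LVec.ofDispatch, hnet, netInjection]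
    ring

theorem FeasX.surplus_le_dispatchSurplus (hx : FeasX R Gp Gcap T PTDF x) (hτ : τs ≤ τb) :
    surplus P0 Q0 α Cg a A τb τs x ≤ dispatchSurplus P0 Q0 α R Cg a A τb τs x.dispatch := by
  rw [surplus_eq_dispatchSurplus_add R]
  refine add_le_of_nonpos_right (Finset.sum_nonpos fun i _ => sub_nonpos.2 ?_)
  rw [← hx.sub_eq_netSale i]
  obtain ⟨-, -, hzs, hzb, -⟩ := hx
  exact sell_sub_buy_le_min hτ (hzs i) (hzb i)

theorem surplus_ofDispatch (hτ : τs ≤ τb) (v : ∀ i, NodeDispatch (H i)) :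
    surplus P0 Q0 α Cg a A τb τs (LVec.ofDispatch R v) =
      dispatchSurplus P0 Q0 α R Cg a A τb τs v := by
  rw [surplus_eq_dispatchSurplus_add R]
  exact add_eq_left.2 <| Finset.sum_eq_zero fun i _ =>
    sub_eq_zero.2 (sell_posPart_sub_buy_negPart hτ _)

theorem isMaxOn_dispatchSurplus (hτ : τs ≤ τb) (hx : FeasX R Gp Gcap T PTDF x)
    (hmax : ∀ z : LVec N H, FeasX R Gp Gcap T PTDF z →
      surplus P0 Q0 α Cg a A τb τs z ≤ surplus P0 Q0 α Cg a A τb τs x) :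
    IsMaxOn (dispatchSurplus P0 Q0 α R Cg a A τb τs) (dispatchSet R Gp Gcap T PTDF) x.dispatch :=
  fun v hv => calc
    dispatchSurplus P0 Q0 α R Cg a A τb τs v
      = surplus P0 Q0 α Cg a A τb τs (LVec.ofDispatch R v) := (surplus_ofDispatch hτ v).symm
    _ ≤ surplus P0 Q0 α Cg a A τb τs x := hmax _ (feasX_ofDispatch hv)
    _ ≤ dispatchSurplus P0 Q0 α R Cg a A τb τs x.dispatch := hx.surplus_le_dispatchSurplus hτ

theorem surplus_le_surplus_ofDispatch (hτ : τs ≤ τb)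
    (hv : IsMaxOn (dispatchSurplus P0 Q0 α R Cg a A τb τs) (dispatchSet R Gp Gcap T PTDF) v)
    (hx : FeasX R Gp Gcap T PTDF x) :
    surplus P0 Q0 α Cg a A τb τs x ≤ surplus P0 Q0 α Cg a A τb τs (LVec.ofDispatch R v) := calc
  surplus P0 Q0 α Cg a A τb τs x
    ≤ dispatchSurplus P0 Q0 α R Cg a A τb τs x.dispatch := hx.surplus_le_dispatchSurplus hτ
  _ ≤ dispatchSurplus P0 Q0 α R Cg a A τb τs v := hv hx.dispatch_mem
  _ = surplus P0 Q0 α Cg a A τb τs (LVec.ofDispatch R v) := (surplus_ofDispatch hτ v).symm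

theorem FeasX.eq_of_dispatch_eq {x' : LVec N H} (hx : FeasX R Gp Gcap T PTDF x)
    (hx' : FeasX R Gp Gcap T PTDF x') (h : x.dispatch = x'.dispatch) :
    x.d = x'.d ∧ x.l = x'.l ∧ x.g = x'.g ∧ x.gih = x'.gih ∧
      ∀ i, x.zs i - x.zb i = x'.zs i - x'.zb i := by
  refine ⟨funext fun i => congrArg d (congrFun h i), funext fun i => congrArg l (congrFun h i),
    funext fun i => congrArg g (congrFun h i), funext fun i => congrArg gih (congrFun h i),
    fun i => ?_⟩
  rw [hx.sub_eq_netSale, hx'.sub_eq_netSale, h]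

end Reduction

theorem lower_level_exists_and_partial_uniqueness_general
    {N K : ℕ} {H : Fin N → Type} [∀ i, Fintype (H i)]
    {P0 Q0 α R Gp : Fin N → ℝ} {Cg : Fin N → ℝ → ℝ}
    {a A Gcap : (i : Fin N) → H i → ℝ}
    {T : Fin K → ℝ} {PTDF : Fin K → Fin N → ℝ}
    (hP0 : ∀ i, 0 < P0 i) (hQ0 : ∀ i, 0 < Q0 i)
    (hα0 : ∀ i, 0 < α i) (hα1 : ∀ i, α i < 1)
    (hR : ∀ i, 0 ≤ R i) (hGp : ∀ i, 0 ≤ Gp i)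
    (hCg : ∀ i, StrictConvexOn ℝ univ (Cg i))
    (hGcap : ∀ i h, 0 ≤ Gcap i h) (hA : ∀ i h, 0 < A i h) (hT : ∀ k, 0 ≤ T k)
    {τb τs : ℝ} (hτ : τs ≤ τb) :
    (∃ x : LVec N H, FeasX R Gp Gcap T PTDF x ∧
      ∀ x' : LVec N H, FeasX R Gp Gcap T PTDF x' →
        surplus P0 Q0 α Cg a A τb τs x' ≤ surplus P0 Q0 α Cg a A τb τs x) ∧
    (∀ x x' : LVec N H,
      FeasX R Gp Gcap T PTDF x → FeasX R Gp Gcap T PTDF x' →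
      (∀ z : LVec N H, FeasX R Gp Gcap T PTDF z →
        surplus P0 Q0 α Cg a A τb τs z ≤ surplus P0 Q0 α Cg a A τb τs x) →
      (∀ z : LVec N H, FeasX R Gp Gcap T PTDF z →
        surplus P0 Q0 α Cg a A τb τs z ≤ surplus P0 Q0 α Cg a A τb τs x') →
      x.d = x'.d ∧ x.l = x'.l ∧ x.g = x'.g ∧ x.gih = x'.gih ∧
        ∀ i, x.zs i - x.zb i = x'.zs i - x'.zb i) := by
  have hconcave := strictConcaveOn_dispatchSurplus (R := R) (a := a) (τb := τb) (τs := τs)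
    hP0 hQ0 hα0 hα1 hCg hA
  have hcont := hconcave.concaveOn.continuousOn isOpen_univ
  obtain ⟨v, ⟨hv, hvmax⟩, hunique⟩ := existsUnique_isMaxOn_of_strictConcaveOn
    isCompact_dispatchSet (dispatchSet_nonempty (PTDF := PTDF) hR hGp hGcap hT)
    (hcont.mono (subset_univ _)) (hconcave.subset (subset_univ _) convex_dispatchSet)
  refine ⟨⟨LVec.ofDispatch R v, feasX_ofDispatch hv, fun _ hx =>
    surplus_le_surplus_ofDispatch hτ hvmax hx⟩, fun x x' hx hx' hmax hmax' => ?_⟩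
  have hxv : x.dispatch = v := hunique _ ⟨hx.dispatch_mem, isMaxOn_dispatchSurplus hτ hx hmax⟩
  have hxv' : x'.dispatch = v :=
    hunique _ ⟨hx'.dispatch_mem, isMaxOn_dispatchSurplus hτ hx' hmax'⟩
  exact hx.eq_of_dispatch_eq hx' (hxv.trans hxv'.symm)

/-- (Lemma 2: existence and partial uniqueness for the lower-level planner problem.) -/
theorem lower_level_exists_and_partial_uniqueness
    (N K : ℕ) (hN : 1 ≤ N)
    (H : Fin N → Type) [∀ i, Fintype (H i)]
    (P0 Q0 α R Gp : Fin N → ℝ) (Cg : Fin N → ℝ → ℝ)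
    (a A Gcap : (i : Fin N) → H i → ℝ)
    (T : Fin K → ℝ) (PTDF : Fin K → Fin N → ℝ)
    (hP0 : ∀ i, 0 < P0 i) (hQ0 : ∀ i, 0 < Q0 i)
    (hα0 : ∀ i, 0 < α i) (hα1 : ∀ i, α i < 1)
    (hR : ∀ i, 0 < R i) (hGp : ∀ i, 0 ≤ Gp i)
    (hCg : ∀ i, ContDiff ℝ 1 (Cg i)) (hCgconv : ∀ i, StrictConvexOn ℝ Set.univ (Cg i))
    (hGcap : ∀ i (h : H i), 0 ≤ Gcap i h)
    (ha : ∀ i (h : H i), 0 < a i h) (hA : ∀ i (h : H i), 0 < A i h)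
    (hT : ∀ k, 0 < T k)
    (τb τs : ℝ) (hτb : 0 ≤ τb) (hτ : τs ≤ τb) :
    (∃ x : LVec N H, FeasX R Gp Gcap T PTDF x ∧
      ∀ x' : LVec N H, FeasX R Gp Gcap T PTDF x' →
        surplus P0 Q0 α Cg a A τb τs x' ≤ surplus P0 Q0 α Cg a A τb τs x) ∧
    (∀ x x' : LVec N H,
      FeasX R Gp Gcap T PTDF x → FeasX R Gp Gcap T PTDF x' →
      (∀ z : LVec N H, FeasX R Gp Gcap T PTDF z →
        surplus P0 Q0 α Cg a A τb τs z ≤ surplus P0 Q0 α Cg a A τb τs x) →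
      (∀ z : LVec N H, FeasX R Gp Gcap T PTDF z →
        surplus P0 Q0 α Cg a A τb τs z ≤ surplus P0 Q0 α Cg a A τb τs x') →
      x.d = x'.d ∧ x.l = x'.l ∧ x.g = x'.g ∧ x.gih = x'.gih ∧
        ∀ i, x.zs i - x.zb i = x'.zs i - x'.zb i) := by
  exact lower_level_exists_and_partial_uniqueness_general hP0 hQ0 hα0 hα1 (fun i => (hR i).le) hGp
    hCgconv hGcap hA (fun k => (hT k).le) hτ
end

section
/- (Planner optimality is equivalent to the market-equilibrium complementarity system.) Fix rates (τb, τs) with τb ≥ 0 and τs ≤ τb. A point x = (d, l, zs, zb, g, (g_{ih}), y) ∈ X maximizes Π(·; τb, τs) over X if and only if there exist multipliers δ ∈ ℝ^N, κ ∈ ℝ^N with κ ≥ 0, ρ_{ih} ≥ 0, θ ∈ ℝ, λ⁺, λ⁻ ∈ ℝ^K with λ⁺, λ⁻ ≥ 0, and p ∈ ℝ^N such that for all i, h ∈ H_i, and k: 0 ≤ d_i ⊥ P0_i − (P0_i/((1−α_i)·Q0_i))·d_i − (p_i + τb) ≤ 0; 0 ≤ l_i ⊥ P0_i − (P0_i/(α_i·Q0_i))·l_i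 − δ_i ≤ 0; 0 ≤ g_i ⊥ −Cg_i′(g_i) + δ_i − κ_i ≤ 0; 0 ≤ κ_i ⊥ g_i − Gp_i ≤ 0; 0 ≤ zs_i ⊥ (p_i + τs) − δ_i ≤ 0; 0 ≤ zb_i ⊥ −(p_i + τb) + δ_i ≤ 0; 0 ≤ g_{ih} ⊥ −(a_{ih} + A_{ih}·g_{ih}) − ρ_{ih} + p_i ≤ 0; 0 ≤ ρ_{ih} ⊥ g_{ih} − G_{ih} ≤ 0; −θ + Σ_k PTDF_{ki}·(λ⁻_k − λ⁺_k) − p_i = 0; 0 ≤ λ⁺_k ⊥ Σ_i PTDF_{ki}·y_i − T_k ≤ 0; and 0 ≤ λ⁻_k ⊥ −Σ_i PTDF_{ki}·y_i − T_k ≤ 0. Here, for reals a, b, '0 ≤ a ⊥ b ≤ 0' means a ≥ 0, b ≤ 0, and a·b = 0. -/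
/-!
The nodal balances express the net injections through the remaining decision variables, so the
planner maximizes a separable concave function over a polyhedron `0 ≤ v`, `A v ≤ b`, `B v = c`. For
a concave objective, maximality at a point is maximality of its derivative there, and by Farkas'
lemma a linear functional is maximal at a point of a polyhedron exactly when it is a combination of
the constraints satisfying complementary slackness. The resulting conditions pair every variable
with its reduced cost. Reading the multiplier of the network balance, corrected by the congestion
rents of the lines, as the nodal price `p i` turns these reduced costs into the bracketed
expressions of the equilibrium system.
-/

open Filter Topology

section Farkas

variable {𝕜 V ι ε : Type*} [Field 𝕜] [LinearOrder 𝕜] [AddCommGroup V] [Module 𝕜 V]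

theorem exists_eq_sum_smul_of_forall_nonpos [IsStrictOrderedRing 𝕜] [Fintype ε]
    (B : ε → V →ₗ[𝕜] 𝕜) (f : V →ₗ[𝕜] 𝕜) (h : ∀ v, (∀ e, B e v = 0) → f v ≤ 0) :
    ∃ ν : ε → 𝕜, f = ∑ e, ν e • B e := by
  have hker : ⨅ e, (B e).ker ≤ f.ker := fun v hv ↦ by
    have hBv : ∀ e, B e v = 0 := by simpa using hv
    have hneg : f (-v) ≤ 0 := h (-v) fun e ↦ by simp [hBv e]
    exact le_antisymm (h v hBv) (by simpa using hneg)
  obtain ⟨ν, hν⟩ :=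
    (Submodule.mem_span_range_iff_exists_fun 𝕜).1 (mem_span_of_iInf_ker_le_ker hker)
  exact ⟨ν, hν.symm⟩

theorem exists_nonneg_sum_insert_smul_eq [DecidableEq ι] {s : Finset ι} {m : ι} (hm : m ∉ s)
    (A : ι → V →ₗ[𝕜] 𝕜) {μ : ι → 𝕜} (hμ : 0 ≤ μ) {c : 𝕜} (hc : 0 ≤ c) :
    ∃ μ' : ι → 𝕜, 0 ≤ μ' ∧ ∑ j ∈ insert m s, μ' j • A j = c • A m + ∑ j ∈ s, μ j • A j := by
  refine ⟨Function.update μ m c, fun j ↦ ?_, ?_⟩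
  · obtain rfl | hj := eq_or_ne j m
    · simpa using hc
    · simpa [hj] using hμ j
  · rw [Finset.sum_insert hm, Function.update_self]
    congr 1
    exact Finset.sum_congr rfl fun j hj ↦ by rw [Function.update_of_ne (ne_of_mem_of_not_mem hj hm)]

theorem exists_normalized_of_not_redundant [IsStrictOrderedRing 𝕜] [DecidableEq ι] {s : Finset ι}
    {m : ι} {A : ι → V →ₗ[𝕜] 𝕜} {B : ε → V →ₗ[𝕜] 𝕜} {f : V →ₗ[𝕜] 𝕜}
    (h : ∀ v, (∀ j ∈ insert m s, A j v ≤ 0) → (∀ e, B e v = 0) → f v ≤ 0)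
    (hred : ¬ ∀ v, (∀ j ∈ s, A j v ≤ 0) → (∀ e, B e v = 0) → f v ≤ 0) :
    ∃ v, (∀ j ∈ s, A j v ≤ 0) ∧ (∀ e, B e v = 0) ∧ 0 ≤ f v ∧ A m v = 1 := by
  push Not at hred
  obtain ⟨w, hAw, hBw, hfw⟩ := hred
  have hmw : 0 < A m w := by
    by_contra! hle
    exact hfw.not_ge (h w (Finset.forall_mem_insert _ _ _ |>.2 ⟨hle, hAw⟩) hBw)
  refine ⟨(A m w)⁻¹ • w, fun j hj ↦ ?_, fun e ↦ by simp [hBw e], ?_, by simp [hmw.ne']⟩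
  · simpa using mul_nonpos_of_nonneg_of_nonpos (inv_nonneg.2 hmw.le) (hAw j hj)
  · simp only [map_smul, smul_eq_mul]
    positivity

/- Farkas' lemma, by induction on the number of inequalities: if the last one is not redundant, some
`v₀` satisfies all the others and has `A m v₀ = 1`, and composing with the projection
`v ↦ v - A m v • v₀` onto the kernel of `A m` eliminates it. -/
theorem exists_nonneg_eq_sum_smul_of_forall_nonpos [IsStrictOrderedRing 𝕜] [Fintype ε]
    (s : Finset ι) (A : ι → V →ₗ[𝕜] 𝕜) (B : ε → V →ₗ[𝕜] 𝕜) (f : V →ₗ[𝕜] 𝕜)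
    (h : ∀ v, (∀ j ∈ s, A j v ≤ 0) → (∀ e, B e v = 0) → f v ≤ 0) :
    ∃ (μ : ι → 𝕜) (ν : ε → 𝕜), 0 ≤ μ ∧ f = ∑ j ∈ s, μ j • A j + ∑ e, ν e • B e := by
  classical
  induction s using Finset.induction_on generalizing A f with
  | empty =>
    obtain ⟨ν, hν⟩ := exists_eq_sum_smul_of_forall_nonpos B f fun v ↦ h v (by simp)
    exact ⟨0, ν, le_rfl, by simpa using hν⟩
  | insert m s hm ih =>
    by_cases hred : ∀ v, (∀ j ∈ s, A j v ≤ 0) → (∀ e, B e v = 0) → f v ≤ 0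
    · obtain ⟨μ, ν, hμ, hf⟩ := ih A f hred
      obtain ⟨μ', hμ', hsum⟩ := exists_nonneg_sum_insert_smul_eq hm A hμ le_rfl
      exact ⟨μ', ν, hμ', by rw [hsum, zero_smul, zero_add, ← hf]⟩
    · obtain ⟨v₀, hAv₀, hBv₀, hfv₀, hmv₀⟩ := exists_normalized_of_not_redundant h hred
      obtain ⟨μ, ν, hμ, hf⟩ := ih (fun j ↦ A j - A j v₀ • A m) (f - f v₀ • A m) fun v hAv hBv ↦ by
        have hproj := h (v - A m v • v₀)
          (Finset.forall_mem_insert _ _ _ |>.2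
            ⟨by simp [hmv₀], fun j hj ↦ by simpa [mul_comm] using hAv j hj⟩)
          fun e ↦ by simp [hBv e, hBv₀ e]
        simpa [mul_comm] using hproj
      have hc : 0 ≤ f v₀ - ∑ j ∈ s, μ j * A j v₀ := sub_nonneg.2 <|
        (Finset.sum_nonpos fun j hj ↦ mul_nonpos_of_nonneg_of_nonpos (hμ j) (hAv₀ j hj)).trans hfv₀
      obtain ⟨μ', hμ', hsum⟩ := exists_nonneg_sum_insert_smul_eq hm A hμ hc
      refine ⟨μ', ν, hμ', (eq_add_of_sub_eq hf).trans ?_⟩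
      ext v
      simp only [hsum, LinearMap.add_apply, LinearMap.sub_apply, LinearMap.smul_apply,
        LinearMap.sum_apply, smul_eq_mul, mul_sub, sub_mul, Finset.sum_sub_distrib, Finset.sum_mul,
        mul_assoc]
      ring

end Farkas

theorem perp_neg_neg {a b : ℝ} : perp (-b) (-a) ↔ perp a b := by
  simp only [perp, Left.nonneg_neg_iff, Left.neg_nonpos_iff, neg_mul_neg, mul_comm b a]
  tauto

section LinearProgram

variable {V ι ε : Type*} [AddCommGroup V] [Module ℝ V]

/-- The polyhedron `A v ≤ b`, `B v = c`, given by the rows of `A` and `B` as linear functionals. -/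
def polyhedron (A : ι → V →ₗ[ℝ] ℝ) (b : ι → ℝ) (B : ε → V →ₗ[ℝ] ℝ) (c : ε → ℝ) : Set V :=
  {v | (∀ j, A j v ≤ b j) ∧ ∀ e, B e v = c e}

theorem convex_polyhedron (A : ι → V →ₗ[ℝ] ℝ) (b : ι → ℝ) (B : ε → V →ₗ[ℝ] ℝ) (c : ε → ℝ) :
    Convex ℝ (polyhedron A b B c) := by
  simp only [polyhedron, Set.ofPred_and, Set.ofPred_forall]
  exact (convex_iInter fun j ↦ convex_halfSpace_le (A j).isLinear (b j)).inter
    (convex_iInter fun e ↦ convex_hyperplane (B e).isLinear (c e))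

theorem exists_pos_forall_add_mul_le [Finite ι] {u s b : ι → ℝ} (hu : ∀ j, u j ≤ b j)
    (hs : ∀ j, u j = b j → s j ≤ 0) : ∃ t > 0, ∀ j, u j + t * s j ≤ b j := by
  have heach (j : ι) : ∀ᶠ t in 𝓝[>] (0 : ℝ), u j + t * s j ≤ b j := by
    obtain heq | hlt := (hu j).eq_or_lt
    · filter_upwards [self_mem_nhdsWithin] with t (ht : 0 < t)
      nlinarith [hs j heq]
    · have hlim : Tendsto (fun t : ℝ ↦ u j + t * s j) (𝓝[>] 0) (𝓝 (u j)) :=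
        ((by fun_prop : Continuous fun t : ℝ ↦ u j + t * s j).tendsto' 0 _ (by simp)).mono_left
          nhdsWithin_le_nhds
      exact (hlim.eventually_lt_const hlt).mono fun _ ↦ le_of_lt
  obtain ⟨t, ht, htpos⟩ := ((eventually_all.2 heach).and self_mem_nhdsWithin).exists
  exact ⟨t, htpos, ht⟩

theorem nonpos_of_isMaxOn_polyhedron [Finite ι] {f : V →ₗ[ℝ] ℝ} {A : ι → V →ₗ[ℝ] ℝ} {b : ι → ℝ}
    {B : ε → V →ₗ[ℝ] ℝ} {c : ε → ℝ} {x v : V} (hx : x ∈ polyhedron A b B c)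
    (hmax : IsMaxOn f (polyhedron A b B c) x) (hA : ∀ j, A j x = b j → A j v ≤ 0)
    (hB : ∀ e, B e v = 0) : f v ≤ 0 := by
  obtain ⟨t, htpos, ht⟩ := exists_pos_forall_add_mul_le hx.1 hA
  have hle : f (x + t • v) ≤ f x :=
    hmax ⟨fun j ↦ by simpa using ht j, fun e ↦ by simpa [hB e] using hx.2 e⟩
  have : t * f v ≤ 0 := by simpa using hle
  exact nonpos_of_mul_nonpos_right this htpos

theorem isMaxOn_polyhedron_iff [Fintype ι] [Fintype ε] {f : V →ₗ[ℝ] ℝ} {A : ι → V →ₗ[ℝ] ℝ}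
    {b : ι → ℝ} {B : ε → V →ₗ[ℝ] ℝ} {c : ε → ℝ} {x : V} (hx : x ∈ polyhedron A b B c) :
    IsMaxOn f (polyhedron A b B c) x ↔
      ∃ (μ : ι → ℝ) (ν : ε → ℝ), (∀ j, perp (μ j) (A j x - b j)) ∧
        f = ∑ j, μ j • A j + ∑ e, ν e • B e := by
  classical
  constructor
  · intro hmax
    obtain ⟨μ, ν, hμ, hf⟩ :=
      exists_nonneg_eq_sum_smul_of_forall_nonpos {j | A j x = b j} A B f fun v hA hB ↦
        nonpos_of_isMaxOn_polyhedron hx hmax (by simpa using hA) hB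
    refine ⟨fun j ↦ if A j x = b j then μ j else 0, ν, fun j ↦ ?_, ?_⟩
    · have hμj : 0 ≤ μ j := hμ j
      dsimp only
      split_ifs with hj
      · simp [perp, hj, hμj]
      · simpa [perp] using hx.1 j
    · simpa [Finset.sum_filter, ite_smul] using hf
  · rintro ⟨μ, ν, hμ, rfl⟩ v hv
    have hA (j : ι) : μ j * A j v ≤ μ j * A j x := by
      nlinarith [(hμ j).2.2, mul_le_mul_of_nonneg_left (hv.1 j) (hμ j).1]
    simpa [hv.2, hx.2] using Finset.sum_le_sum fun j (_ : j ∈ Finset.univ) ↦ hA j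

variable {J : Type*}

/-- The polyhedron `0 ≤ v`, `A v ≤ b`, `B v = c` in coordinate space. -/
def nonnegPolyhedron (A : ι → (J → ℝ) →ₗ[ℝ] ℝ) (b : ι → ℝ) (B : ε → (J → ℝ) →ₗ[ℝ] ℝ)
    (c : ε → ℝ) : Set (J → ℝ) :=
  polyhedron (Sum.elim (fun j ↦ -LinearMap.proj j) A) (Sum.elim 0 b) B c

theorem convex_nonnegPolyhedron (A : ι → (J → ℝ) →ₗ[ℝ] ℝ) (b : ι → ℝ) (B : ε → (J → ℝ) →ₗ[ℝ] ℝ)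
    (c : ε → ℝ) : Convex ℝ (nonnegPolyhedron A b B c) :=
  convex_polyhedron _ _ _ _

theorem mem_nonnegPolyhedron {A : ι → (J → ℝ) →ₗ[ℝ] ℝ} {b : ι → ℝ} {B : ε → (J → ℝ) →ₗ[ℝ] ℝ}
    {c : ε → ℝ} {v : J → ℝ} :
    v ∈ nonnegPolyhedron A b B c ↔ 0 ≤ v ∧ (∀ j, A j v ≤ b j) ∧ ∀ e, B e v = c e := by
  simp [nonnegPolyhedron, polyhedron, Pi.le_def, and_assoc]

theorem eq_sum_apply_single_smul_proj [Fintype J] [DecidableEq J] (f : (J → ℝ) →ₗ[ℝ] ℝ) :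
    f = ∑ j, f (Pi.single j 1) • LinearMap.proj j := by
  ext j
  simp [Pi.single_apply]

/- The multiplier of the sign constraint on `v j` is minus the reduced cost of `v j`. -/
theorem isMaxOn_nonnegPolyhedron_iff [Fintype ι] [Fintype ε] [Finite J] [DecidableEq J]
    {f : (J → ℝ) →ₗ[ℝ] ℝ} {A : ι → (J → ℝ) →ₗ[ℝ] ℝ} {b : ι → ℝ} {B : ε → (J → ℝ) →ₗ[ℝ] ℝ}
    {c : ε → ℝ} {x : J → ℝ} (hx : x ∈ nonnegPolyhedron A b B c) :
    IsMaxOn f (nonnegPolyhedron A b B c) x ↔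
      ∃ (μ : ι → ℝ) (ν : ε → ℝ), (∀ r, perp (μ r) (A r x - b r)) ∧
        ∀ j, perp (x j) ((f - (∑ r, μ r • A r + ∑ e, ν e • B e)) (Pi.single j 1)) := by
  have := Fintype.ofFinite J
  refine (isMaxOn_polyhedron_iff hx).trans ⟨?_, ?_⟩
  · rintro ⟨μ, ν, hμ, rfl⟩
    refine ⟨μ ∘ Sum.inr, ν, fun r ↦ hμ (.inr r), fun j ↦ ?_⟩
    rw [← perp_neg_neg]
    simpa [Fintype.sum_sum_type, Pi.single_apply] using hμ (.inl j)
  · rintro ⟨μ, ν, hμ, hred⟩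
    set r := f - (∑ r, μ r • A r + ∑ e, ν e • B e) with hr
    refine ⟨Sum.elim (fun j ↦ -r (Pi.single j 1)) μ, ν, ?_, ?_⟩
    · rintro (j | j)
      · simpa using perp_neg_neg.2 (hred j)
      · exact hμ j
    · refine (eq_add_of_sub_eq hr.symm).trans ?_
      conv_lhs => rw [eq_sum_apply_single_smul_proj r]
      simp [Fintype.sum_sum_type, add_assoc]

end LinearProgram

section ConcaveProgram

theorem isMaxOn_iff_of_hasFDerivAt {E : Type*} [NormedAddCommGroup E] [NormedSpace ℝ E]
    {s : Set E} {f : E → ℝ} {f' : E →L[ℝ] ℝ} {x : E} (hf : ConcaveOn ℝ s f)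
    (hf' : HasFDerivAt f f' x) (hx : x ∈ s) : IsMaxOn f s x ↔ IsMaxOn f' s x := by
  constructor
  · intro hmax v hv
    have hnonpos : f' (v - x) ≤ 0 := hmax.localize.hasFDerivWithinAt_nonpos hf'.hasFDerivWithinAt
      (sub_mem_posTangentConeAt_of_segment_subset (hf.1.segment_subset hx hv))
    simpa using hnonpos
  · intro hmax v hv
    have hline := hf.comp_affineMap (AffineMap.lineMap x v)
    have hmem (t : ℝ) (ht : t ∈ Set.Icc (0 : ℝ) 1) : t ∈ AffineMap.lineMap x v ⁻¹' s :=
      hf.1.lineMap_mem hx hv ht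
    have hderiv : HasDerivAt (f ∘ AffineMap.lineMap x v) (f' (v - x)) (0 : ℝ) := by
      refine HasFDerivAt.comp_hasDerivAt (0 : ℝ) ?_ AffineMap.hasDerivAt_lineMap
      simpa using hf'
    have hslope := hline.slope_le_of_hasDerivAt (hmem 0 (by simp)) (hmem 1 (by simp)) one_pos hderiv
    have hle : f' v ≤ f' x := hmax hv
    simp only [slope_def_field, Function.comp_apply, AffineMap.lineMap_apply_one,
      AffineMap.lineMap_apply_zero, sub_zero, div_one, map_sub] at hslope
    change f v ≤ f x
    linarith

variable {J : Type*} [Fintype J]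

theorem concaveOn_sum_apply {φ : J → ℝ → ℝ} (hφ : ∀ j, ConcaveOn ℝ Set.univ (φ j)) :
    ConcaveOn ℝ Set.univ fun v : J → ℝ ↦ ∑ j, φ j (v j) := by
  refine ⟨convex_univ, fun v _ w _ a b ha hb hab ↦ ?_⟩
  simp only [Finset.smul_sum, ← Finset.sum_add_distrib]
  exact Finset.sum_le_sum fun j _ ↦ (hφ j).2 (Set.mem_univ _) (Set.mem_univ _) ha hb hab

theorem hasFDerivAt_sum_apply {φ : J → ℝ → ℝ} {φ' x : J → ℝ}
    (hφ : ∀ j, HasDerivAt (φ j) (φ' j) (x j)) :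
    HasFDerivAt (fun v : J → ℝ ↦ ∑ j, φ j (v j))
      (∑ j, φ' j • LinearMap.proj j : (J → ℝ) →ₗ[ℝ] ℝ).toContinuousLinearMap x := by
  have hterm (j : J) : HasFDerivAt (fun v : J → ℝ ↦ φ j (v j))
      (φ' j • ContinuousLinearMap.proj (R := ℝ) (φ := fun _ ↦ ℝ) j) x :=
    (hφ j).comp_hasFDerivAt x (hasFDerivAt_apply j x)
  exact (HasFDerivAt.fun_sum fun j _ ↦ hterm j).congr_fderiv (by ext v; simp)

variable {ι ε : Type*} [Fintype ι] [Fintype ε] [DecidableEq J]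

theorem isMaxOn_sum_nonnegPolyhedron_iff {φ : J → ℝ → ℝ} {φ' x : J → ℝ}
    {A : ι → (J → ℝ) →ₗ[ℝ] ℝ} {b : ι → ℝ} {B : ε → (J → ℝ) →ₗ[ℝ] ℝ} {c : ε → ℝ}
    (hφ : ∀ j, ConcaveOn ℝ Set.univ (φ j)) (hφ' : ∀ j, HasDerivAt (φ j) (φ' j) (x j))
    (hx : x ∈ nonnegPolyhedron A b B c) :
    IsMaxOn (fun v ↦ ∑ j, φ j (v j)) (nonnegPolyhedron A b B c) x ↔
      ∃ (μ : ι → ℝ) (ν : ε → ℝ), (∀ r, perp (μ r) (A r x - b r)) ∧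
        ∀ j, perp (x j) (φ' j - (∑ r, μ r • A r + ∑ e, ν e • B e) (Pi.single j 1)) := by
  have hconc := (concaveOn_sum_apply hφ).subset (Set.subset_univ _)
    (convex_nonnegPolyhedron A b B c)
  rw [isMaxOn_iff_of_hasFDerivAt hconc (hasFDerivAt_sum_apply hφ') hx,
    LinearMap.coe_toContinuousLinearMap', isMaxOn_nonnegPolyhedron_iff hx]
  simp [LinearMap.sub_apply, Pi.single_apply]

end ConcaveProgram

section Integral

theorem hasDerivAt_integral {f : ℝ → ℝ} (hf : Continuous f) (a t : ℝ) :
    HasDerivAt (fun t ↦ ∫ m in a..t, f m) (f t) t :=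
  (hf.integral_hasStrictDerivAt a t).hasDerivAt

theorem concaveOn_integral_of_antitone {f : ℝ → ℝ} (hf : Continuous f) (hanti : Antitone f)
    (a : ℝ) : ConcaveOn ℝ Set.univ fun t ↦ ∫ m in a..t, f m :=
  Antitone.concaveOn_univ_of_deriv (fun t ↦ (hasDerivAt_integral hf a t).differentiableAt)
    (by simpa only [funext fun t ↦ (hasDerivAt_integral hf a t).deriv] using hanti)

theorem concaveOn_integral_sub_mul_s11 {p s : ℝ} (hs : 0 ≤ s) :
    ConcaveOn ℝ Set.univ fun t ↦ ∫ m in (0 : ℝ)..t, (p - s * m) :=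
  concaveOn_integral_of_antitone (by fun_prop)
    (fun _ _ hle ↦ sub_le_sub_left (mul_le_mul_of_nonneg_left hle hs) p) 0

end Integral

namespace LVec

/-- The indices of the sign-constrained decision variables. The net injections `y` are not among
them: the nodal balances determine `y` from the other variables, see `LVec.netInjection`. -/
inductive Coord {N : ℕ} (H : Fin N → Type)
  | d (i : Fin N)
  | l (i : Fin N)
  | zs (i : Fin N)
  | zb (i : Fin N)
  | g (i : Fin N)
  | gih (i : Fin N) (h : H i)

/-- The indices of the inequality constraints other than signs: backup and plant capacities, and
the line limits in both directions. -/
inductive Limit {N : ℕ} (K : ℕ) (H : Fin N → Type)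
  | backup (i : Fin N)
  | plant (i : Fin N) (h : H i)
  | flow (k : Fin K)
  | counterflow (k : Fin K)

variable {N K : ℕ} {H : Fin N → Type}

theorem forall_coord {P : Coord H → Prop} :
    (∀ j, P j) ↔ (∀ i, P (.d i)) ∧ (∀ i, P (.l i)) ∧ (∀ i, P (.zs i)) ∧ (∀ i, P (.zb i)) ∧
      (∀ i, P (.g i)) ∧ ∀ i h, P (.gih i h) := by
  refine ⟨fun hP ↦ ⟨fun _ ↦ hP _, fun _ ↦ hP _, fun _ ↦ hP _, fun _ ↦ hP _, fun _ ↦ hP _,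
    fun _ _ ↦ hP _⟩, fun ⟨hd, hl, hzs, hzb, hg, hgih⟩ j ↦ ?_⟩
  cases j <;> simp only [hd, hl, hzs, hzb, hg, hgih]

theorem forall_limit {P : Limit K H → Prop} :
    (∀ r, P r) ↔ (∀ i, P (.backup i)) ∧ (∀ i h, P (.plant i h)) ∧ (∀ k, P (.flow k)) ∧
      ∀ k, P (.counterflow k) := by
  refine ⟨fun hP ↦ ⟨fun _ ↦ hP _, fun _ _ ↦ hP _, fun _ ↦ hP _, fun _ ↦ hP _⟩,
    fun ⟨hbackup, hplant, hflow, hcounterflow⟩ r ↦ ?_⟩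
  cases r <;> simp only [hbackup, hplant, hflow, hcounterflow]

/-- `Coord H` as the sum of its constructors, for the `Fintype` instance and for sums over it. -/
def Coord.equivSum : Coord H ≃ Fin N ⊕ Fin N ⊕ Fin N ⊕ Fin N ⊕ Fin N ⊕ Σ i, H i where
  toFun
    | .d i => .inl i
    | .l i => .inr (.inl i)
    | .zs i => .inr (.inr (.inl i))
    | .zb i => .inr (.inr (.inr (.inl i)))
    | .g i => .inr (.inr (.inr (.inr (.inl i))))
    | .gih i h => .inr (.inr (.inr (.inr (.inr ⟨i, h⟩))))
  invFun := Sum.elim .d (Sum.elim .l (Sum.elim .zs (Sum.elim .zb (Sum.elim .g fun e ↦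
    .gih e.1 e.2))))
  left_inv := by rintro (_ | _ | _ | _ | _ | _) <;> rfl
  right_inv := by rintro (_ | _ | _ | _ | _ | _) <;> rfl

/-- `Limit K H` as the sum of its constructors, for the `Fintype` instance and for sums over it. -/
def Limit.equivSum : Limit K H ≃ Fin N ⊕ (Σ i, H i) ⊕ Fin K ⊕ Fin K where
  toFun
    | .backup i => .inl i
    | .plant i h => .inr (.inl ⟨i, h⟩)
    | .flow k => .inr (.inr (.inl k))
    | .counterflow k => .inr (.inr (.inr k))
  invFun := Sum.elim .backup (Sum.elim (fun e ↦ .plant e.1 e.2) (Sum.elim .flow .counterflow))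
  left_inv := by rintro (_ | _ | _ | _) <;> rfl
  right_inv := by rintro (_ | _ | _ | _) <;> rfl

instance [∀ i, Fintype (H i)] : Fintype (Coord H) := Fintype.ofEquiv _ Coord.equivSum.symm

instance [∀ i, Fintype (H i)] : Fintype (Limit K H) := Fintype.ofEquiv _ Limit.equivSum.symm

theorem sum_coord [∀ i, Fintype (H i)] {M : Type*} [AddCommMonoid M] (f : Coord H → M) :
    ∑ j, f j = ∑ i, f (.d i) + ∑ i, f (.l i) + ∑ i, f (.zs i) + ∑ i, f (.zb i) + ∑ i, f (.g i) +
      ∑ i, ∑ h, f (.gih i h) := by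
  rw [← Coord.equivSum.symm.sum_comp]
  simp only [Fintype.sum_sum_type, Fintype.sum_sigma, add_assoc]
  rfl

theorem sum_limit [∀ i, Fintype (H i)] {M : Type*} [AddCommMonoid M] (f : Limit K H → M) :
    ∑ r, f r = ∑ i, f (.backup i) + ∑ i, ∑ h, f (.plant i h) + ∑ k, f (.flow k) +
      ∑ k, f (.counterflow k) := by
  rw [← Limit.equivSum.symm.sum_comp]
  simp only [Fintype.sum_sum_type, Fintype.sum_sigma, add_assoc]
  rfl

/-- The sign-constrained variables of `x` as a point of coordinate space. -/
def coords (x : LVec N H) : Coord H → ℝ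
  | .d i => x.d i
  | .l i => x.l i
  | .zs i => x.zs i
  | .zb i => x.zb i
  | .g i => x.g i
  | .gih i h => x.gih i h

section Objective

variable (P0 Q0 α : Fin N → ℝ) (Cg : Fin N → ℝ → ℝ) (a A : (i : Fin N) → H i → ℝ) (τb τs : ℝ)

/-- The contribution of each variable to the social surplus. -/
noncomputable def surplusTerm : Coord H → ℝ → ℝ
  | .d i, t => (∫ m in (0 : ℝ)..t, (P0 i - P0 i / ((1 - α i) * Q0 i) * m)) - τb * t
  | .l i, t => ∫ m in (0 : ℝ)..t, (P0 i - P0 i / (α i * Q0 i) * m)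
  | .zs _, t => τs * t
  | .zb _, t => -(τb * t)
  | .g i, t => -Cg i t
  | .gih i h, t => -(a i h * t + 1 / 2 * A i h * t ^ 2)

/-- The derivative of `LVec.surplusTerm`. -/
noncomputable def marginalSurplus : Coord H → ℝ → ℝ
  | .d i, t => P0 i - P0 i / ((1 - α i) * Q0 i) * t - τb
  | .l i, t => P0 i - P0 i / (α i * Q0 i) * t
  | .zs _, _ => τs
  | .zb _, _ => -τb
  | .g i, t => -deriv (Cg i) t
  | .gih i h, t => -(a i h + A i h * t)

theorem surplus_eq_sum [∀ i, Fintype (H i)] (x : LVec N H) :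
    surplus P0 Q0 α Cg a A τb τs x = ∑ j, surplusTerm P0 Q0 α Cg a A τb τs j (x.coords j) := by
  simp only [surplus, sum_coord, surplusTerm, coords, Finset.sum_add_distrib,
    Finset.sum_sub_distrib, Finset.sum_neg_distrib]
  ring

variable {P0 Q0 α Cg a A}

theorem concaveOn_surplusTerm (hP0 : ∀ i, 0 ≤ P0 i) (hQ0 : ∀ i, 0 ≤ Q0 i) (hα0 : ∀ i, 0 ≤ α i)
    (hα1 : ∀ i, α i ≤ 1) (hCg : ∀ i, ConvexOn ℝ Set.univ (Cg i)) (hA : ∀ i h, 0 ≤ A i h)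
    (j : Coord H) : ConcaveOn ℝ Set.univ (surplusTerm P0 Q0 α Cg a A τb τs j) := by
  have hmul (r : ℝ) : ConvexOn ℝ Set.univ fun t ↦ r * t :=
    (LinearMap.mulLeft ℝ r).convexOn convex_univ
  match j with
  | .d i =>
    have hslope : 0 ≤ P0 i / ((1 - α i) * Q0 i) :=
      div_nonneg (hP0 i) (mul_nonneg (sub_nonneg.2 (hα1 i)) (hQ0 i))
    exact (concaveOn_integral_sub_mul_s11 hslope).sub (hmul τb)
  | .l i => exact concaveOn_integral_sub_mul_s11 (div_nonneg (hP0 i) (mul_nonneg (hα0 i) (hQ0 i)))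
  | .zs _ => exact (LinearMap.mulLeft ℝ τs).concaveOn convex_univ
  | .zb _ => exact (hmul τb).neg
  | .g i => exact (hCg i).neg
  | .gih i h =>
    have hquad := even_two.convexOn_pow.smul (mul_nonneg one_half_pos.le (hA i h))
    exact ((hmul (a i h)).add hquad).neg

theorem hasDerivAt_surplusTerm {x : LVec N H} (hCg : ∀ i, DifferentiableAt ℝ (Cg i) (x.g i))
    (j : Coord H) :
    HasDerivAt (surplusTerm P0 Q0 α Cg a A τb τs j)
      (marginalSurplus P0 Q0 α Cg a A τb τs j (x.coords j)) (x.coords j) := by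
  match j with
  | .d _ => exact (hasDerivAt_integral (by fun_prop) _ _).sub (hasDerivAt_const_mul τb)
  | .l _ => exact hasDerivAt_integral (by fun_prop) _ _
  | .zs _ => exact hasDerivAt_const_mul τs
  | .zb _ => exact (hasDerivAt_const_mul τb).neg
  | .g i => exact (hCg i).hasDerivAt.neg
  | .gih i h =>
    have hquad := (hasDerivAt_pow 2 (x.gih i h)).const_mul (1 / 2 * A i h)
    refine ((hasDerivAt_const_mul (a i h)).add hquad).neg.congr_deriv ?_
    simp only [marginalSurplus, coords]
    ring

end Objective

section Prices

variable (PTDF : Fin K → Fin N → ℝ) (μ : Limit K H → ℝ) (ν : Option (Fin N) → ℝ)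

/-- The nodal price `p i`: minus the multiplier `ν none` of the network balance, corrected by the
congestion rents of the lines. -/
def nodalPrice (i : Fin N) : ℝ :=
  -ν none + ∑ k, PTDF k i * (μ (.counterflow k) - μ (.flow k))

theorem sum_nodalPrice_mul (y : Fin N → ℝ) :
    ∑ i, nodalPrice PTDF μ ν i * y i =
      ∑ k, (μ (.counterflow k) - μ (.flow k)) * ∑ i, PTDF k i * y i - ν none * ∑ i, y i := by
  simp only [nodalPrice, add_mul, Finset.sum_add_distrib, Finset.sum_mul, Finset.mul_sum, neg_mul,
    Finset.sum_neg_distrib]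
  rw [Finset.sum_comm, neg_add_eq_sub]
  congr! 3
  ring

/-- The opportunity cost of a unit of each variable at the multipliers `μ` of the inequality
constraints and `ν` of the equality constraints. -/
def opportunityCost : Coord H → ℝ
  | .d i => nodalPrice PTDF μ ν i
  | .l i => ν (some i)
  | .zs i => ν (some i) - nodalPrice PTDF μ ν i
  | .zb i => nodalPrice PTDF μ ν i - ν (some i)
  | .g i => μ (.backup i) - ν (some i)
  | .gih i h => μ (.plant i h) - nodalPrice PTDF μ ν i

end Prices

section ReducedCost

variable {P0 Q0 α : Fin N → ℝ} {Cg : Fin N → ℝ → ℝ} {a A : (i : Fin N) → H i → ℝ}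
  {PTDF : Fin K → Fin N → ℝ} {τb τs : ℝ} {x : LVec N H}

theorem forall_perp_reducedCost_iff {μ : Limit K H → ℝ} {ν : Option (Fin N) → ℝ} :
    (∀ j, perp (x.coords j)
        (marginalSurplus P0 Q0 α Cg a A τb τs j (x.coords j) - opportunityCost PTDF μ ν j)) ↔
      (∀ i, perp (x.d i)
        (P0 i - P0 i / ((1 - α i) * Q0 i) * x.d i - (nodalPrice PTDF μ ν i + τb))) ∧
      (∀ i, perp (x.l i) (P0 i - P0 i / (α i * Q0 i) * x.l i - ν (some i))) ∧
      (∀ i, perp (x.zs i) (nodalPrice PTDF μ ν i + τs - ν (some i))) ∧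
      (∀ i, perp (x.zb i) (-(nodalPrice PTDF μ ν i + τb) + ν (some i))) ∧
      (∀ i, perp (x.g i) (-deriv (Cg i) (x.g i) + ν (some i) - μ (.backup i))) ∧
      ∀ i h, perp (x.gih i h)
        (-(a i h + A i h * x.gih i h) - μ (.plant i h) + nodalPrice PTDF μ ν i) := by
  rw [forall_coord]
  simp only [coords, marginalSurplus, opportunityCost]
  simp only [sub_eq_add_neg, neg_add_rev, neg_neg, add_comm, add_left_comm, add_assoc]

end ReducedCost

variable [∀ i, Fintype (H i)]

/-- The net injection `y i` that the nodal balance prescribes as a function of the other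
variables. -/
def netInjection (i : Fin N) : (Coord H → ℝ) →ₗ[ℝ] ℝ :=
  ∑ h, LinearMap.proj (.gih i h) + LinearMap.proj (.zs i) - LinearMap.proj (.zb i) -
    LinearMap.proj (.d i)

theorem netInjection_apply (i : Fin N) (v : Coord H → ℝ) :
    netInjection i v = ∑ h, v (.gih i h) + v (.zs i) - v (.zb i) - v (.d i) := by
  simp [netInjection]

/-- The decision vector with prescribed sign-constrained variables and balanced nodes. -/
def ofCoords (v : Coord H → ℝ) : LVec N H where
  d i := v (.d i)
  l i := v (.l i)
  zs i := v (.zs i)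
  zb i := v (.zb i)
  g i := v (.g i)
  gih i h := v (.gih i h)
  y i := netInjection i v

theorem coords_ofCoords (v : Coord H → ℝ) : (ofCoords v).coords = v := by
  ext (_ | _ | _ | _ | _ | _) <;> rfl

section Feasibility

variable (R Gp : Fin N → ℝ) (Gcap : (i : Fin N) → H i → ℝ) (T : Fin K → ℝ)
  (PTDF : Fin K → Fin N → ℝ)

/-- The left-hand sides of the inequality constraints. -/
def limitForm : Limit K H → (Coord H → ℝ) →ₗ[ℝ] ℝ
  | .backup i => LinearMap.proj (.g i)
  | .plant i h => LinearMap.proj (.gih i h)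
  | .flow k => ∑ i, PTDF k i • netInjection i
  | .counterflow k => -∑ i, PTDF k i • netInjection i

/-- The right-hand sides of the inequality constraints. -/
def limitBound : Limit K H → ℝ
  | .backup i => Gp i
  | .plant i h => Gcap i h
  | .flow k => T k
  | .counterflow k => T k

/-- The left-hand sides of the equality constraints: `some i` is the renewable balance at node `i`
and `none` is the balance of the net injections over the network. -/
def balanceForm : Option (Fin N) → (Coord H → ℝ) →ₗ[ℝ] ℝ
  | some i => LinearMap.proj (.l i) + LinearMap.proj (.zs i) - LinearMap.proj (.zb i) -
      LinearMap.proj (.g i)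
  | none => ∑ i, netInjection i

/-- The right-hand sides of the equality constraints, see `LVec.balanceForm`. -/
def balanceValue : Option (Fin N) → ℝ
  | some i => R i
  | none => 0

/-- The feasible set `X` in coordinate space. -/
def feasibleCoords : Set (Coord H → ℝ) :=
  nonnegPolyhedron (limitForm PTDF) (limitBound Gp Gcap T) balanceForm (balanceValue R)

theorem forall_limitForm_coords_le_iff {x : LVec N H} :
    (∀ r, limitForm PTDF r x.coords ≤ limitBound Gp Gcap T r) ↔
      (∀ i, x.g i ≤ Gp i) ∧ (∀ i h, x.gih i h ≤ Gcap i h) ∧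
        ∀ k, -T k ≤ ∑ i, PTDF k i * netInjection i x.coords ∧
          ∑ i, PTDF k i * netInjection i x.coords ≤ T k := by
  rw [forall_limit, forall_and, and_comm (a := ∀ k, _ ≤ ∑ i, _)]
  simp [limitForm, limitBound, coords, neg_le]

theorem forall_balanceForm_coords_eq_iff {x : LVec N H} :
    (∀ e, balanceForm e x.coords = balanceValue R e) ↔
      (∑ i, netInjection i x.coords = 0) ∧ ∀ i, x.l i + x.zs i - x.zb i - x.g i - R i = 0 := by
  simp [Option.forall, balanceForm, balanceValue, coords, sub_eq_zero]

theorem netInjection_coords_eq_iff {x : LVec N H} {i : Fin N} {y : ℝ} :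
    netInjection i x.coords = y ↔ y - ∑ h, x.gih i h - (x.zs i - x.zb i) + x.d i = 0 := by
  rw [netInjection_apply]
  simp only [coords]
  constructor <;> intro h <;> linarith

theorem feasX_iff {x : LVec N H} :
    FeasX R Gp Gcap T PTDF x ↔
      x.coords ∈ feasibleCoords R Gp Gcap T PTDF ∧ ∀ i, netInjection i x.coords = x.y i := by
  rw [feasibleCoords, mem_nonnegPolyhedron, forall_limitForm_coords_le_iff,
    forall_balanceForm_coords_eq_iff, Pi.le_def, forall_coord]
  constructor
  · rintro ⟨hd, hl, hzs, hzb, hg, hgih, hR, hGp, hGcap, hy, hT, hbal⟩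
    have hnet (i : Fin N) : netInjection i x.coords = x.y i :=
      netInjection_coords_eq_iff.2 (hbal i)
    simp only [hnet]
    exact ⟨⟨⟨hd, hl, hzs, hzb, hg, hgih⟩, ⟨hGp, hGcap, hT⟩, hy, hR⟩, fun _ ↦ trivial⟩
  · rintro ⟨⟨⟨hd, hl, hzs, hzb, hg, hgih⟩, ⟨hGp, hGcap, hT⟩, hy, hR⟩, hnet⟩
    simp only [hnet] at hT hy
    exact ⟨hd, hl, hzs, hzb, hg, hgih, hR, hGp, hGcap, hy, hT,
      fun i ↦ netInjection_coords_eq_iff.1 (hnet i)⟩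

theorem isMaxOn_coords_iff {x : LVec N H} {F : (Coord H → ℝ) → ℝ} :
    (∀ x', FeasX R Gp Gcap T PTDF x' → F x'.coords ≤ F x.coords) ↔
      IsMaxOn F (feasibleCoords R Gp Gcap T PTDF) x.coords := by
  constructor
  · intro hmax v hv
    have hle := hmax (ofCoords v)
    rw [feasX_iff, coords_ofCoords] at hle
    exact hle ⟨hv, fun _ ↦ rfl⟩
  · exact fun hmax x' hx' ↦ hmax ((feasX_iff R Gp Gcap T PTDF).1 hx').1

end Feasibility

section Lagrangian

variable (PTDF : Fin K → Fin N → ℝ) (μ : Limit K H → ℝ) (ν : Option (Fin N) → ℝ)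

theorem sum_smul_forms_apply (v : Coord H → ℝ) :
    (∑ r, μ r • limitForm PTDF r + ∑ e, ν e • balanceForm e : (Coord H → ℝ) →ₗ[ℝ] ℝ) v =
      ∑ j, opportunityCost PTDF μ ν j * v j := by
  have hexpand : ∑ i, nodalPrice PTDF μ ν i * netInjection i v =
      ∑ i, ∑ h, nodalPrice PTDF μ ν i * v (.gih i h) + ∑ i, nodalPrice PTDF μ ν i * v (.zs i) -
        ∑ i, nodalPrice PTDF μ ν i * v (.zb i) - ∑ i, nodalPrice PTDF μ ν i * v (.d i) := by
    simp only [netInjection_apply, mul_add, mul_sub, Finset.mul_sum, Finset.sum_add_distrib,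
      Finset.sum_sub_distrib]
  have hprice := sum_nodalPrice_mul PTDF μ ν fun i ↦ netInjection i v
  simp only [sub_mul, Finset.sum_sub_distrib] at hprice
  simp only [LinearMap.add_apply, LinearMap.sub_apply, LinearMap.neg_apply, LinearMap.smul_apply,
    LinearMap.sum_apply, LinearMap.proj_apply, smul_eq_mul, sum_limit, Fintype.sum_option,
    sum_coord, limitForm, balanceForm, opportunityCost, sub_mul, mul_add, mul_sub, mul_neg,
    Finset.sum_add_distrib, Finset.sum_sub_distrib, Finset.sum_neg_distrib]
  linarith

theorem sum_smul_forms_single [DecidableEq (Coord H)] (j : Coord H) :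
    (∑ r, μ r • limitForm PTDF r + ∑ e, ν e • balanceForm e : (Coord H → ℝ) →ₗ[ℝ] ℝ)
      (Pi.single j 1) = opportunityCost PTDF μ ν j := by
  rw [sum_smul_forms_apply]
  simp [Pi.single_apply]

end Lagrangian

section Equilibrium

variable {R Gp P0 Q0 α : Fin N → ℝ} {Cg : Fin N → ℝ → ℝ} {a A Gcap : (i : Fin N) → H i → ℝ}
  {T : Fin K → ℝ} {PTDF : Fin K → Fin N → ℝ} {τb τs : ℝ} {x : LVec N H}

theorem optimal_iff_exists_perp (hP0 : ∀ i, 0 ≤ P0 i) (hQ0 : ∀ i, 0 ≤ Q0 i) (hα0 : ∀ i, 0 ≤ α i)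
    (hα1 : ∀ i, α i ≤ 1) (hCg : ∀ i, ConvexOn ℝ Set.univ (Cg i))
    (hCg' : ∀ i, DifferentiableAt ℝ (Cg i) (x.g i)) (hA : ∀ i h, 0 ≤ A i h)
    (hx : FeasX R Gp Gcap T PTDF x) :
    (∀ x', FeasX R Gp Gcap T PTDF x' →
        surplus P0 Q0 α Cg a A τb τs x' ≤ surplus P0 Q0 α Cg a A τb τs x) ↔
      ∃ (μ : Limit K H → ℝ) (ν : Option (Fin N) → ℝ),
        (∀ r, perp (μ r) (limitForm PTDF r x.coords - limitBound Gp Gcap T r)) ∧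
          ∀ j, perp (x.coords j)
            (marginalSurplus P0 Q0 α Cg a A τb τs j (x.coords j) - opportunityCost PTDF μ ν j) := by
  classical
  simp only [surplus_eq_sum]
  rw [isMaxOn_coords_iff (F := fun v ↦ ∑ j, surplusTerm P0 Q0 α Cg a A τb τs j (v j)),
    feasibleCoords, isMaxOn_sum_nonnegPolyhedron_iff
      (concaveOn_surplusTerm τb τs hP0 hQ0 hα0 hα1 hCg hA) (hasDerivAt_surplusTerm τb τs hCg')
      ((feasX_iff R Gp Gcap T PTDF).1 hx).1]
  simp only [sum_smul_forms_single]

variable (Gp P0 Q0 α Cg a A Gcap T PTDF τb τs x) in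
/-- The complementarity system of the market equilibrium: consumers, generators and arbitrageurs
respond optimally to the nodal prices `p`, which are consistent with the congestion multipliers
`lp` and `lm` of the two directions of each line. -/
def IsMarketEquilibrium : Prop :=
  ∃ (δ κ : Fin N → ℝ) (ρ : (i : Fin N) → H i → ℝ) (θ : ℝ) (lp lm : Fin K → ℝ) (p : Fin N → ℝ),
    (∀ i, 0 ≤ κ i) ∧ (∀ i (h : H i), 0 ≤ ρ i h) ∧
    (∀ k, 0 ≤ lp k) ∧ (∀ k, 0 ≤ lm k) ∧
    (∀ i, perp (x.d i) (P0 i - (P0 i / ((1 - α i) * Q0 i)) * x.d i - (p i + τb))) ∧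
    (∀ i, perp (x.l i) (P0 i - (P0 i / (α i * Q0 i)) * x.l i - δ i)) ∧
    (∀ i, perp (x.g i) (-(deriv (Cg i) (x.g i)) + δ i - κ i)) ∧
    (∀ i, perp (κ i) (x.g i - Gp i)) ∧
    (∀ i, perp (x.zs i) ((p i + τs) - δ i)) ∧
    (∀ i, perp (x.zb i) (-(p i + τb) + δ i)) ∧
    (∀ i (h : H i), perp (x.gih i h) (-(a i h + A i h * x.gih i h) - ρ i h + p i)) ∧
    (∀ i (h : H i), perp (ρ i h) (x.gih i h - Gcap i h)) ∧
    (∀ i, -θ + (∑ k, PTDF k i * (lm k - lp k)) - p i = 0) ∧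
    (∀ k, perp (lp k) ((∑ i, PTDF k i * x.y i) - T k)) ∧
    (∀ k, perp (lm k) (-(∑ i, PTDF k i * x.y i) - T k))

theorem forall_perp_limit_iff (hnet : ∀ i, netInjection i x.coords = x.y i) {μ : Limit K H → ℝ} :
    (∀ r, perp (μ r) (limitForm PTDF r x.coords - limitBound Gp Gcap T r)) ↔
      (∀ i, perp (μ (.backup i)) (x.g i - Gp i)) ∧
      (∀ i h, perp (μ (.plant i h)) (x.gih i h - Gcap i h)) ∧
      (∀ k, perp (μ (.flow k)) (∑ i, PTDF k i * x.y i - T k)) ∧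
      ∀ k, perp (μ (.counterflow k)) (-∑ i, PTDF k i * x.y i - T k) := by
  rw [forall_limit]
  simp [limitForm, limitBound, coords, hnet]

theorem isMarketEquilibrium_iff_exists_perp (hnet : ∀ i, netInjection i x.coords = x.y i) :
    IsMarketEquilibrium Gp P0 Q0 α Cg a A Gcap T PTDF τb τs x ↔
      ∃ (μ : Limit K H → ℝ) (ν : Option (Fin N) → ℝ),
        (∀ r, perp (μ r) (limitForm PTDF r x.coords - limitBound Gp Gcap T r)) ∧
          ∀ j, perp (x.coords j)
            (marginalSurplus P0 Q0 α Cg a A τb τs j (x.coords j) - opportunityCost PTDF μ ν j) := by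
  simp only [forall_perp_limit_iff hnet, forall_perp_reducedCost_iff]
  constructor
  · rintro ⟨δ, κ, ρ, θ, lp, lm, p, -, -, -, -, hd, hl, hg, hκ, hzs, hzb, hgih, hρ, hp, hlp, hlm⟩
    obtain rfl : p = fun i ↦ -θ + ∑ k, PTDF k i * (lm k - lp k) :=
      funext fun i ↦ (sub_eq_zero.1 (hp i)).symm
    exact ⟨fun
      | .backup i => κ i
      | .plant i h => ρ i h
      | .flow k => lp k
      | .counterflow k => lm k, fun e ↦ e.elim θ δ, ⟨hκ, hρ, hlp, hlm⟩,
      hd, hl, hzs, hzb, hg, hgih⟩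
  · rintro ⟨μ, ν, ⟨hκ, hρ, hlp, hlm⟩, hd, hl, hzs, hzb, hg, hgih⟩
    exact ⟨fun i ↦ ν (some i), fun i ↦ μ (.backup i), fun i h ↦ μ (.plant i h), ν none,
      fun k ↦ μ (.flow k), fun k ↦ μ (.counterflow k), nodalPrice PTDF μ ν,
      fun i ↦ (hκ i).1, fun i h ↦ (hρ i h).1, fun k ↦ (hlp k).1, fun k ↦ (hlm k).1,
      hd, hl, hg, hκ, hzs, hzb, hgih, hρ, fun i ↦ sub_self _, hlp, hlm⟩

end Equilibrium

end LVec

theorem planner_optimal_iff_equilibrium_KKT_general {N K : ℕ} {H : Fin N → Type}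
    [∀ i, Fintype (H i)] {P0 Q0 α R Gp : Fin N → ℝ} {Cg : Fin N → ℝ → ℝ}
    {a A Gcap : (i : Fin N) → H i → ℝ} {T : Fin K → ℝ} {PTDF : Fin K → Fin N → ℝ} {τb τs : ℝ}
    {x : LVec N H} (hP0 : ∀ i, 0 ≤ P0 i) (hQ0 : ∀ i, 0 < Q0 i) (hα0 : ∀ i, 0 < α i)
    (hα1 : ∀ i, α i < 1) (hCg : ∀ i, ConvexOn ℝ Set.univ (Cg i))
    (hCg' : ∀ i, DifferentiableAt ℝ (Cg i) (x.g i)) (hA : ∀ i h, 0 ≤ A i h)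
    (hx : FeasX R Gp Gcap T PTDF x) :
    (∀ x', FeasX R Gp Gcap T PTDF x' →
        surplus P0 Q0 α Cg a A τb τs x' ≤ surplus P0 Q0 α Cg a A τb τs x) ↔
      LVec.IsMarketEquilibrium Gp P0 Q0 α Cg a A Gcap T PTDF τb τs x :=
  have hnet : ∀ i, LVec.netInjection i x.coords = x.y i := ((LVec.feasX_iff ..).1 hx).2
  (LVec.optimal_iff_exists_perp hP0 (fun i ↦ (hQ0 i).le) (fun i ↦ (hα0 i).le)
    (fun i ↦ (hα1 i).le) hCg hCg' hA hx).trans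
    (LVec.isMarketEquilibrium_iff_exists_perp hnet).symm

/-- (Planner optimality is equivalent to the market-equilibrium complementarity system.) -/
theorem planner_optimal_iff_equilibrium_KKT
    (N K : ℕ) (hN : 1 ≤ N)
    (H : Fin N → Type) [∀ i, Fintype (H i)]
    (P0 Q0 α R Gp : Fin N → ℝ) (Cg : Fin N → ℝ → ℝ)
    (a A Gcap : (i : Fin N) → H i → ℝ)
    (T : Fin K → ℝ) (PTDF : Fin K → Fin N → ℝ)
    (hP0 : ∀ i, 0 < P0 i) (hQ0 : ∀ i, 0 < Q0 i)
    (hα0 : ∀ i, 0 < α i) (hα1 : ∀ i, α i < 1)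
    (hR : ∀ i, 0 < R i) (hGp : ∀ i, 0 ≤ Gp i)
    (hCg : ∀ i, ContDiff ℝ 1 (Cg i)) (hCgconv : ∀ i, StrictConvexOn ℝ Set.univ (Cg i))
    (hGcap : ∀ i (h : H i), 0 ≤ Gcap i h)
    (ha : ∀ i (h : H i), 0 < a i h) (hA : ∀ i (h : H i), 0 < A i h)
    (hT : ∀ k, 0 < T k)
    (τb τs : ℝ) (hτb : 0 ≤ τb) (hτ : τs ≤ τb)
    (x : LVec N H) (hx : FeasX R Gp Gcap T PTDF x) :
    (∀ x' : LVec N H, FeasX R Gp Gcap T PTDF x' →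
        surplus P0 Q0 α Cg a A τb τs x' ≤ surplus P0 Q0 α Cg a A τb τs x) ↔
    ∃ (δ κ : Fin N → ℝ) (ρ : (i : Fin N) → H i → ℝ) (θ : ℝ)
      (lp lm : Fin K → ℝ) (p : Fin N → ℝ),
      (∀ i, 0 ≤ κ i) ∧ (∀ i (h : H i), 0 ≤ ρ i h) ∧
      (∀ k, 0 ≤ lp k) ∧ (∀ k, 0 ≤ lm k) ∧
      (∀ i, perp (x.d i) (P0 i - (P0 i / ((1 - α i) * Q0 i)) * x.d i - (p i + τb))) ∧
      (∀ i, perp (x.l i) (P0 i - (P0 i / (α i * Q0 i)) * x.l i - δ i)) ∧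
      (∀ i, perp (x.g i) (-(deriv (Cg i) (x.g i)) + δ i - κ i)) ∧
      (∀ i, perp (κ i) (x.g i - Gp i)) ∧
      (∀ i, perp (x.zs i) ((p i + τs) - δ i)) ∧
      (∀ i, perp (x.zb i) (-(p i + τb) + δ i)) ∧
      (∀ i (h : H i), perp (x.gih i h) (-(a i h + A i h * x.gih i h) - ρ i h + p i)) ∧
      (∀ i (h : H i), perp (ρ i h) (x.gih i h - Gcap i h)) ∧
      (∀ i, -θ + (∑ k, PTDF k i * (lm k - lp k)) - p i = 0) ∧
      (∀ k, perp (lp k) ((∑ i, PTDF k i * x.y i) - T k)) ∧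
      (∀ k, perp (lm k) (-(∑ i, PTDF k i * x.y i) - T k)) :=
  planner_optimal_iff_equilibrium_KKT_general (fun i ↦ (hP0 i).le) hQ0 hα0 hα1
    (fun i ↦ (hCgconv i).convexOn) (fun i ↦ (hCg i).differentiable one_ne_zero _)
    (fun i h ↦ (hA i h).le) hx
end

section
/- (Finiteness and convexity of the optimal value function.) For every (τb, τs) ∈ ℝ² with τs ≤ τb, the value V(τb, τs) = sup_{x ∈ X} Π(x; τb, τs) is finite. Moreover, V is a convex function on the rate set 𝒯. -/
/-!
For a fixed decision `x` the surplus is affine in the rates `(τb, τs)`, so `V` is a pointwise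
supremum of affine functions and is convex wherever that supremum is finite. For finiteness, only
`τs * zs - τb * zb` could be unbounded above. Since `τs ≤ τb`, selling and buying at once never
pays, so this revenue is at most `τs * (zs - zb)`, and the energy balance turns `zs - zb` into
`g + R - l`. What remains is a concave quadratic in each of `d` and `l`, terms in
`g ∈ [0, Gp]`, and a nonpositive generation term.
-/

section Convexity

variable {𝕜 E β ι : Type*} [Semiring 𝕜] [PartialOrder 𝕜]

theorem convexOn_of_isLUB_image [AddCommMonoid E] [SMul 𝕜 E] [AddCommMonoid β] [PartialOrder β]
    [IsOrderedAddMonoid β] [Module 𝕜 β] [PosSMulMono 𝕜 β] {s : Set E} {X : Set ι}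
    {f : E → ι → β} {V : E → β} (hs : Convex 𝕜 s)
    (hf : ∀ x ∈ X, ConvexOn 𝕜 s (fun e => f e x)) (hV : ∀ e ∈ s, IsLUB (f e '' X) (V e)) :
    ConvexOn 𝕜 s V := by
  refine ⟨hs, fun u hu v hv p q hp hq hpq => ?_⟩
  refine (hV _ (hs hu hv hp hq hpq)).2 ?_
  rintro _ ⟨x, hx, rfl⟩
  calc f (p • u + q • v) x ≤ p • f u x + q • f v x := (hf x hx).2 hu hv hp hq hpq
    _ ≤ p • V u + q • V v := by
      gcongr
      · exact (hV u hu).1 ⟨x, hx, rfl⟩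
      · exact (hV v hv).1 ⟨x, hx, rfl⟩

theorem convex_setOf_snd_le_fst [AddCommMonoid E] [PartialOrder E] [IsOrderedAddMonoid E]
    [Module 𝕜 E] [PosSMulMono 𝕜 E] : Convex 𝕜 {τ : E × E | τ.2 ≤ τ.1} :=
  fun _ hu _ hv _ _ hp hq _ =>
    add_le_add (smul_le_smul_of_nonneg_left hu hp) (smul_le_smul_of_nonneg_left hv hq)

end Convexity

theorem Tset_eq_inter (τhat τlow : ℝ) :
    Tset τhat τlow = {τ | τ.2 ≤ τ.1} ∩ Set.Icc 0 τhat ×ˢ Set.Ici τlow := by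
  ext τ
  simp only [Tset, Set.mem_ofPred_eq, Set.mem_inter_iff, Set.mem_prod, Set.mem_Icc, Set.mem_Ici]
  tauto

theorem convex_Tset (τhat τlow : ℝ) : Convex ℝ (Tset τhat τlow) := by
  rw [Tset_eq_inter]
  exact convex_setOf_snd_le_fst.inter ((convex_Icc 0 τhat).prod (convex_Ici τlow))

theorem mul_sub_sq_le_sq_div {𝕜 : Type*} [Field 𝕜] [LinearOrder 𝕜] [IsStrictOrderedRing 𝕜]
    {c : 𝕜} (hc : 0 < c) (p q : 𝕜) : p * q - c * q ^ 2 / 2 ≤ p ^ 2 / (2 * c) := by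
  have hsq : 0 ≤ (c * q - p) ^ 2 / (2 * c) := by positivity
  calc p * q - c * q ^ 2 / 2 = p ^ 2 / (2 * c) - (c * q - p) ^ 2 / (2 * c) := by
        field_simp
        ring
    _ ≤ p ^ 2 / (2 * c) := sub_le_self _ hsq

theorem integral_linear_demand (P c q : ℝ) :
    ∫ m in (0 : ℝ)..q, (P - c * m) = P * q - c * q ^ 2 / 2 := by
  have hint : IntervalIntegrable (fun m : ℝ => c * m) MeasureTheory.volume 0 q :=
    (continuous_const_mul c).intervalIntegrable 0 q
  rw [intervalIntegral.integral_sub intervalIntegrable_const hint,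
    intervalIntegral.integral_const, intervalIntegral.integral_const_mul, integral_id, smul_eq_mul]
  ring

theorem integral_linear_demand_sub_mul_le {c : ℝ} (hc : 0 < c) (P t q : ℝ) :
    (∫ m in (0 : ℝ)..q, (P - c * m)) - t * q ≤ (P - t) ^ 2 / (2 * c) := by
  rw [integral_linear_demand]
  linarith [mul_sub_sq_le_sq_div hc (P - t) q]

theorem sell_sub_buy_le_mul_net {𝕜 : Type*} [CommRing 𝕜] [PartialOrder 𝕜] [IsOrderedRing 𝕜]
    {τb τs zb : 𝕜} (hτ : τs ≤ τb) (hzb : 0 ≤ zb) (zs : 𝕜) :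
    τs * zs - τb * zb ≤ τs * (zs - zb) := by
  rw [mul_sub]
  gcongr

theorem prosumer_surplus_le {c τb τs l zs zb g G R C C₀ : ℝ} (hc : 0 < c) (hτ : τs ≤ τb)
    (hzb : 0 ≤ zb) (hbal : l + zs - zb - g - R = 0) (hg : 0 ≤ g) (hgG : g ≤ G) (hC : C₀ ≤ C)
    (P : ℝ) :
    τs * zs - τb * zb + (∫ m in (0 : ℝ)..l, (P - c * m)) - C
      ≤ (P - τs) ^ 2 / (2 * c) + τs * R + |τs| * G - C₀ := by
  have htrade : τs * zs - τb * zb ≤ τs * g + τs * R - τs * l := by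
    have hnet : zs - zb = g + R - l := by linarith
    calc τs * zs - τb * zb ≤ τs * (zs - zb) := sell_sub_buy_le_mul_net hτ hzb zs
      _ = τs * g + τs * R - τs * l := by rw [hnet]; ring
  have hbackup : τs * g ≤ |τs| * G := mul_le_mul (le_abs_self τs) hgG hg (abs_nonneg τs)
  have hload := integral_linear_demand_sub_mul_le hc P τs l
  linarith

section SocialSurplus

variable {N K : ℕ} {H : Fin N → Type} [∀ i, Fintype (H i)]
  {P0 Q0 α R Gp : Fin N → ℝ} {Cg : Fin N → ℝ → ℝ} {a A Gcap : (i : Fin N) → H i → ℝ}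
  {T : Fin K → ℝ} {PTDF : Fin K → Fin N → ℝ}

theorem nonempty_setOf_feasX (hR : ∀ i, 0 ≤ R i) (hGp : ∀ i, 0 ≤ Gp i)
    (hGcap : ∀ i (h : H i), 0 ≤ Gcap i h) (hT : ∀ k, 0 ≤ T k) :
    {x : LVec N H | FeasX R Gp Gcap T PTDF x}.Nonempty := by
  -- Autarky: every node consumes exactly its own renewable output.
  refine ⟨⟨0, R, 0, 0, 0, 0, 0⟩, ?_⟩
  simp [FeasX, hR, hGp, hGcap, hT]

theorem surplus_eq_add_rate_terms (τb τs : ℝ) (x : LVec N H) :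
    surplus P0 Q0 α Cg a A τb τs x = surplus P0 Q0 α Cg a A 0 0 x
      + (τs * ∑ i, x.zs i - τb * (∑ i, x.d i + ∑ i, x.zb i)) := by
  simp only [surplus, Finset.sum_sub_distrib, Finset.sum_add_distrib, ← Finset.mul_sum]
  ring

theorem convexOn_surplus {s : Set (ℝ × ℝ)} (hs : Convex ℝ s) (x : LVec N H) :
    ConvexOn ℝ s (fun τ => surplus P0 Q0 α Cg a A τ.1 τ.2 x) := by
  refine ⟨hs, fun u _ v _ p q _ _ hpq => le_of_eq ?_⟩
  obtain rfl : q = 1 - p := eq_sub_of_add_eq' hpq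
  simp only [Prod.fst_add, Prod.snd_add, Prod.smul_fst, Prod.smul_snd, smul_eq_mul,
    surplus_eq_add_rate_terms (_ + _), surplus_eq_add_rate_terms u.1,
    surplus_eq_add_rate_terms v.1]
  ring

theorem bddAbove_surplus_image (hd : ∀ i, 0 < P0 i / ((1 - α i) * Q0 i))
    (hl : ∀ i, 0 < P0 i / (α i * Q0 i)) (hCg : ∀ i, BddBelow (Cg i '' Set.Icc 0 (Gp i)))
    (ha : ∀ i (h : H i), 0 ≤ a i h) (hA : ∀ i (h : H i), 0 ≤ A i h)
    {τb τs : ℝ} (hτ : τs ≤ τb) :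
    BddAbove (surplus P0 Q0 α Cg a A τb τs '' {x | FeasX R Gp Gcap T PTDF x}) := by
  choose C₀ hC₀ using hCg
  refine ⟨(∑ i, (P0 i - τb) ^ 2 / (2 * (P0 i / ((1 - α i) * Q0 i))))
    + (∑ i, ((P0 i - τs) ^ 2 / (2 * (P0 i / (α i * Q0 i))) + τs * R i + |τs| * Gp i - C₀ i)), ?_⟩
  rintro _ ⟨x, ⟨-, -, -, hzb, hg, hgih, hbal, hgGp, -⟩, rfl⟩
  have hgen : 0 ≤ ∑ i, ∑ h, (a i h * x.gih i h + (1 / 2) * A i h * (x.gih i h) ^ 2) :=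
    Finset.sum_nonneg fun i _ => Finset.sum_nonneg fun h _ =>
      add_nonneg (mul_nonneg (ha i h) (hgih i h))
        (mul_nonneg (mul_nonneg one_half_pos.le (hA i h)) (sq_nonneg _))
  refine (sub_le_self _ hgen).trans (add_le_add (Finset.sum_le_sum fun i _ => ?_)
    (Finset.sum_le_sum fun i _ => ?_))
  · exact integral_linear_demand_sub_mul_le (hd i) (P0 i) τb (x.d i)
  · exact prosumer_surplus_le (hl i) hτ (hzb i) (hbal i) (hg i) (hgGp i)
      (hC₀ i ⟨x.g i, ⟨hg i, hgGp i⟩, rfl⟩) (P0 i)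

theorem value_function_finite_and_convex_general
    (hP0 : ∀ i, 0 < P0 i) (hQ0 : ∀ i, 0 < Q0 i) (hα0 : ∀ i, 0 < α i) (hα1 : ∀ i, α i < 1)
    (hR : ∀ i, 0 ≤ R i) (hGp : ∀ i, 0 ≤ Gp i)
    (hCg : ∀ i, BddBelow (Cg i '' Set.Icc 0 (Gp i))) (hGcap : ∀ i (h : H i), 0 ≤ Gcap i h)
    (ha : ∀ i (h : H i), 0 ≤ a i h) (hA : ∀ i (h : H i), 0 ≤ A i h) (hT : ∀ k, 0 ≤ T k) :
    (∀ τ ∈ {τ : ℝ × ℝ | τ.2 ≤ τ.1},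
      IsLUB (surplus P0 Q0 α Cg a A τ.1 τ.2 '' {x : LVec N H | FeasX R Gp Gcap T PTDF x})
        (Vval P0 Q0 α Cg a A Gcap R Gp T PTDF τ)) ∧
    ConvexOn ℝ {τ : ℝ × ℝ | τ.2 ≤ τ.1} (Vval P0 Q0 α Cg a A Gcap R Gp T PTDF) := by
  have hd (i) : 0 < P0 i / ((1 - α i) * Q0 i) :=
    div_pos (hP0 i) (mul_pos (sub_pos.2 (hα1 i)) (hQ0 i))
  have hl (i) : 0 < P0 i / (α i * Q0 i) := div_pos (hP0 i) (mul_pos (hα0 i) (hQ0 i))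
  have hV : ∀ τ ∈ {τ : ℝ × ℝ | τ.2 ≤ τ.1},
      IsLUB (surplus P0 Q0 α Cg a A τ.1 τ.2 '' {x : LVec N H | FeasX R Gp Gcap T PTDF x})
        (Vval P0 Q0 α Cg a A Gcap R Gp T PTDF τ) := fun _ hτ =>
    isLUB_csSup ((nonempty_setOf_feasX hR hGp hGcap hT).image _)
      (bddAbove_surplus_image hd hl hCg ha hA hτ)
  exact ⟨hV, convexOn_of_isLUB_image convex_setOf_snd_le_fst
    (fun x _ => convexOn_surplus convex_setOf_snd_le_fst x) hV⟩

end SocialSurplus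

/-- (Finiteness and convexity of the optimal value function.) For every `(τb, τs)` with
`τs ≤ τb` the supremum defining `V` is finite (attained as a least upper bound in `ℝ`),
and `V` is convex on the rate set `𝒯`. -/
theorem value_function_finite_and_convex
    (N K : ℕ) (hN : 1 ≤ N)
    (H : Fin N → Type) [∀ i, Fintype (H i)]
    (P0 Q0 α R Gp : Fin N → ℝ) (Cg : Fin N → ℝ → ℝ)
    (a A Gcap : (i : Fin N) → H i → ℝ)
    (T : Fin K → ℝ) (PTDF : Fin K → Fin N → ℝ)
    (hP0 : ∀ i, 0 < P0 i) (hQ0 : ∀ i, 0 < Q0 i)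
    (hα0 : ∀ i, 0 < α i) (hα1 : ∀ i, α i < 1)
    (hR : ∀ i, 0 < R i) (hGp : ∀ i, 0 ≤ Gp i)
    (hCg : ∀ i, ContDiff ℝ 1 (Cg i)) (hCgconv : ∀ i, StrictConvexOn ℝ Set.univ (Cg i))
    (hGcap : ∀ i (h : H i), 0 ≤ Gcap i h)
    (ha : ∀ i (h : H i), 0 < a i h) (hA : ∀ i (h : H i), 0 < A i h)
    (hT : ∀ k, 0 < T k)
    (τhat τlow : ℝ) (hτhat : 0 < τhat) (hτlow : τlow < 0) :
    (∀ τb τs : ℝ, τs ≤ τb →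
      ∃ v : ℝ, IsLUB ((fun x => surplus P0 Q0 α Cg a A τb τs x) ''
        {x : LVec N H | FeasX R Gp Gcap T PTDF x}) v) ∧
    ConvexOn ℝ (Tset τhat τlow)
      (fun τ => Vval P0 Q0 α Cg a A Gcap R Gp T PTDF τ) := by
  obtain ⟨hV, hconv⟩ := value_function_finite_and_convex_general (PTDF := PTDF) hP0 hQ0 hα0 hα1
    (fun i => (hR i).le) hGp (fun i => isCompact_Icc.bddBelow_image (hCg i).continuous.continuousOn)
    hGcap (fun i h => (ha i h).le) (fun i h => (hA i h).le) (fun k => (hT k).le)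
  exact ⟨fun τb τs hτ => ⟨_, hV (τb, τs) hτ⟩,
    hconv.subset (fun _ hτ => hτ.2.2.2) (convex_Tset τhat τlow)⟩
end

section
/- (Continuity and attainment of the maximum of the optimal value function.) The optimal value function V is continuous on the rate set 𝒯, and V attains its maximum over 𝒯: there exists (τb*, τs*) ∈ 𝒯 with V(τb*, τs*) ≥ V(τb, τs) for all (τb, τs) ∈ 𝒯. -/
/-!
Buying and selling the same amount at a node changes no constraint and costs `τb - τs` per unit, so
as long as `τs ≤ τb` the supremum defining `V` may be taken over *netted* decision vectors, those in
which no node both buys and sells. Summing the balances over all nodes bounds total demand by total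
capacity, and netting then bounds the trades: the netted feasible set is compact, although `X` is
not. A supremum of a jointly continuous function over a fixed compact set is continuous in the
parameter, and the rate set is compact.
-/

open Set

namespace LVec

variable {N : ℕ} {H : Fin N → Type}

/-- The identification of a decision vector with the tuple of its components, through which decision
vectors are topologized. -/
def equivProd : LVec N H ≃ (Fin N → ℝ) × (Fin N → ℝ) × (Fin N → ℝ) × (Fin N → ℝ) ×
    (Fin N → ℝ) × ((i : Fin N) → H i → ℝ) × (Fin N → ℝ) where
  toFun x := (x.d, x.l, x.zs, x.zb, x.g, x.gih, x.y)
  invFun p := ⟨p.1, p.2.1, p.2.2.1, p.2.2.2.1, p.2.2.2.2.1, p.2.2.2.2.2.1, p.2.2.2.2.2.2⟩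

instance : TopologicalSpace (LVec N H) := .induced equivProd inferInstance

-- Continuity of a parametric integral is available only over first countable parameter spaces.
instance [∀ i, Countable (H i)] : FirstCountableTopology (LVec N H) :=
  TopologicalSpace.firstCountableTopology_induced _ _ equivProd

lemma continuous_equivProd : Continuous (equivProd : LVec N H ≃ _) := continuous_induced_dom

@[fun_prop]
lemma continuous_d : Continuous (d : LVec N H → _) := continuous_equivProd.fst

@[fun_prop]
lemma continuous_l : Continuous (l : LVec N H → _) := continuous_equivProd.snd.fst

@[fun_prop]
lemma continuous_zs : Continuous (zs : LVec N H → _) := continuous_equivProd.snd.snd.fst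

@[fun_prop]
lemma continuous_zb : Continuous (zb : LVec N H → _) := continuous_equivProd.snd.snd.snd.fst

@[fun_prop]
lemma continuous_g : Continuous (g : LVec N H → _) := continuous_equivProd.snd.snd.snd.snd.fst

@[fun_prop]
lemma continuous_gih : Continuous (gih : LVec N H → _) :=
  continuous_equivProd.snd.snd.snd.snd.snd.fst

@[fun_prop]
lemma continuous_y : Continuous (y : LVec N H → _) :=
  continuous_equivProd.snd.snd.snd.snd.snd.snd

lemma isCompact_preimage_Icc (p q : (Fin N → ℝ) × (Fin N → ℝ) × (Fin N → ℝ) × (Fin N → ℝ) ×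
    (Fin N → ℝ) × ((i : Fin N) → H i → ℝ) × (Fin N → ℝ)) :
    IsCompact (equivProd ⁻¹' Icc p q) :=
  (equivProd.toHomeomorphOfIsInducing ⟨rfl⟩).isCompact_preimage.2 isCompact_Icc

/-- A decision vector is netted if no node both sells (`zs`) and buys (`zb`). Restricting to
such vectors makes the feasible set bounded. For nonnegative trades the minimum vanishes exactly
when one of the two does. -/
def IsNetted (x : LVec N H) : Prop := ∀ i, min (x.zs i) (x.zb i) = 0

/-- The decision vector obtained by cancelling, at each node, sales against purchases. It stays
feasible, and its surplus is no smaller as long as selling pays no more than buying costs. -/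
noncomputable def net (x : LVec N H) : LVec N H :=
  { x with
    zs := fun i ↦ x.zs i - min (x.zs i) (x.zb i)
    zb := fun i ↦ x.zb i - min (x.zs i) (x.zb i) }

lemma isNetted_net (x : LVec N H) : x.net.IsNetted := fun i ↦ by
  simp only [net, min_sub_sub_right, sub_self]

lemma isClosed_setOf_isNetted : IsClosed {x : LVec N H | x.IsNetted} := by
  simp only [IsNetted, ofPred_forall]
  exact isClosed_iInter fun i ↦ isClosed_eq (by fun_prop) (by fun_prop)

end LVec

section FeasibleSet

variable {N K : ℕ} {H : Fin N → Type} [∀ i, Fintype (H i)] {R Gp : Fin N → ℝ}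
  {Gcap : (i : Fin N) → H i → ℝ} {T : Fin K → ℝ} {PTDF : Fin K → Fin N → ℝ} {x : LVec N H}

-- Autarky is feasible: each node consumes its own renewable output.
lemma exists_feasX (hR : ∀ i, 0 ≤ R i) (hGp : ∀ i, 0 ≤ Gp i) (hGcap : ∀ i h, 0 ≤ Gcap i h)
    (hT : ∀ k, 0 ≤ T k) : ∃ x : LVec N H, FeasX R Gp Gcap T PTDF x := by
  refine ⟨⟨0, R, 0, 0, 0, 0, 0⟩, ?_⟩
  simp [FeasX, hR, hGp, hGcap, hT]

lemma isClosed_setOf_feasX : IsClosed {x : LVec N H | FeasX R Gp Gcap T PTDF x} := by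
  simp only [FeasX, ofPred_and, ofPred_forall]
  repeat' first | apply IsClosed.inter | refine isClosed_iInter fun _ ↦ ?_
  all_goals first
    | exact isClosed_le (by fun_prop) (by fun_prop)
    | exact isClosed_eq (by fun_prop) (by fun_prop)

lemma FeasX.net (hx : FeasX R Gp Gcap T PTDF x) : FeasX R Gp Gcap T PTDF x.net := by
  obtain ⟨hd, hl, -, -, hg, hgih, hbalance, hGp, hGcap, hy, hflow, hnode⟩ := hx
  refine ⟨hd, hl, fun i ↦ sub_nonneg.2 (min_le_left _ _), fun i ↦ sub_nonneg.2 (min_le_right _ _),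
    hg, hgih, fun i ↦ ?_, hGp, hGcap, hy, hflow, fun i ↦ ?_⟩
  · simpa only [LVec.net, ← add_sub_assoc, sub_sub_sub_cancel_right, add_sub_right_comm]
      using hbalance i
  · simpa only [LVec.net, sub_sub_sub_cancel_right] using hnode i

-- The grid injections `y` sum to zero, so they drop out of the summed node balances.
lemma FeasX.sum_demand_le (hx : FeasX R Gp Gcap T PTDF x) :
    ∑ i, (x.d i + x.l i) ≤ ∑ i, ((∑ h, Gcap i h) + Gp i + R i) := by
  obtain ⟨-, -, -, -, -, -, hbalance, hGp, hGcap, hy, -, hnode⟩ := hx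
  calc ∑ i, (x.d i + x.l i) = ∑ i, (x.d i + x.l i + x.y i) := by
        rw [Finset.sum_add_distrib (f := fun i ↦ x.d i + x.l i), hy, add_zero]
    _ ≤ ∑ i, ((∑ h, Gcap i h) + Gp i + R i) := by
        refine Finset.sum_le_sum fun i _ ↦ ?_
        have hgen : ∑ h, x.gih i h ≤ ∑ h, Gcap i h := Finset.sum_le_sum fun h _ ↦ hGcap i h
        linarith [hbalance i, hnode i, hGp i]

lemma FeasX.demand_le (hx : FeasX R Gp Gcap T PTDF x) (i : Fin N) :
    x.d i + x.l i ≤ ∑ j, ((∑ h, Gcap j h) + Gp j + R j) :=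
  (Finset.single_le_sum (f := fun j ↦ x.d j + x.l j) (fun j _ ↦ add_nonneg (hx.1 j) (hx.2.1 j))
    (Finset.mem_univ i)).trans hx.sum_demand_le

lemma FeasX.zs_le_of_isNetted (hx : FeasX R Gp Gcap T PTDF x) (hnet : x.IsNetted) (i : Fin N) :
    x.zs i ≤ Gp i + |R i| := by
  obtain ⟨-, hl, -, -, hg, -, hbalance, hGp, -⟩ := hx
  rcases min_eq_iff.1 (hnet i) with ⟨hzs, -⟩ | ⟨hzb, -⟩
  · linarith [hg i, hGp i, abs_nonneg (R i)]
  · linarith [hbalance i, hl i, hGp i, le_abs_self (R i)]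

lemma FeasX.zb_le_of_isNetted (hx : FeasX R Gp Gcap T PTDF x) (hnet : x.IsNetted) (i : Fin N) :
    x.zb i ≤ x.l i + |R i| := by
  obtain ⟨-, hl, -, -, hg, -, hbalance, -⟩ := hx
  rcases min_eq_iff.1 (hnet i) with ⟨hzs, -⟩ | ⟨hzb, -⟩
  · linarith [hbalance i, hg i, neg_abs_le (R i)]
  · linarith [hl i, abs_nonneg (R i)]

theorem isCompact_setOf_feasX_isNetted :
    IsCompact {x : LVec N H | FeasX R Gp Gcap T PTDF x ∧ x.IsNetted} := by
  set M : ℝ := ∑ j, ((∑ h, Gcap j h) + Gp j + R j)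
  refine (LVec.isCompact_preimage_Icc (0, 0, 0, 0, 0, 0, fun i ↦ -(M + (M + |R i|)))
    (fun _ ↦ M, fun _ ↦ M, fun i ↦ Gp i + |R i|, fun i ↦ M + |R i|, Gp, Gcap,
      fun i ↦ (∑ h, Gcap i h) + (Gp i + |R i|))).of_isClosed_subset
    (isClosed_setOf_feasX.inter LVec.isClosed_setOf_isNetted) ?_
  rintro x ⟨hx, hnet⟩
  have ⟨hd, hl, hzs, hzb, hg, hgih, _, hGp, hGcap, _, _, hnode⟩ := hx
  have hd_le i : x.d i ≤ M := by linarith [hx.demand_le i, hl i]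
  have hl_le i : x.l i ≤ M := by linarith [hx.demand_le i, hd i]
  have hzs_le := hx.zs_le_of_isNetted hnet
  have hzb_le i : x.zb i ≤ M + |R i| := (hx.zb_le_of_isNetted hnet i).trans (by grw [hl_le i])
  have hy_ge i : -(M + (M + |R i|)) ≤ x.y i := by
    have hgen : 0 ≤ ∑ h, x.gih i h := Finset.sum_nonneg fun h _ ↦ hgih i h
    linarith [hnode i, hd_le i, hzs i, hzb_le i]
  have hy_le i : x.y i ≤ (∑ h, Gcap i h) + (Gp i + |R i|) := by
    have hgen : ∑ h, x.gih i h ≤ ∑ h, Gcap i h := Finset.sum_le_sum fun h _ ↦ hGcap i h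
    linarith [hnode i, hd i, hzs_le i, hzb i]
  exact ⟨⟨hd, hl, hzs, hzb, hg, hgih, hy_ge⟩, ⟨hd_le, hl_le, hzs_le, hzb_le, hGp, hGcap, hy_le⟩⟩

end FeasibleSet

section ValueFunction

variable {N K : ℕ} {H : Fin N → Type} [∀ i, Fintype (H i)] {P0 Q0 α R Gp : Fin N → ℝ}
  {Cg : Fin N → ℝ → ℝ} {a A Gcap : (i : Fin N) → H i → ℝ} {T : Fin K → ℝ}
  {PTDF : Fin K → Fin N → ℝ} {τ : ℝ × ℝ}

@[fun_prop]
lemma continuous_surplus {X : Type*} [TopologicalSpace X] [FirstCountableTopology X]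
    {τb τs : X → ℝ} {x : X → LVec N H} (hCg : ∀ i, Continuous (Cg i)) (hτb : Continuous τb)
    (hτs : Continuous τs) (hx : Continuous x) :
    Continuous fun t ↦ surplus P0 Q0 α Cg a A (τb t) (τs t) (x t) := by
  unfold surplus
  fun_prop

lemma surplus_net (τb τs : ℝ) (x : LVec N H) :
    surplus P0 Q0 α Cg a A τb τs x.net =
      surplus P0 Q0 α Cg a A τb τs x + (τb - τs) * ∑ i, min (x.zs i) (x.zb i) := by
  simp only [surplus, LVec.net, mul_sub, Finset.sum_add_distrib, Finset.sum_sub_distrib,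
    ← Finset.mul_sum]
  ring

lemma FeasX.surplus_le_surplus_net {x : LVec N H} (hx : FeasX R Gp Gcap T PTDF x) {τb τs : ℝ}
    (hτ : τs ≤ τb) : surplus P0 Q0 α Cg a A τb τs x ≤ surplus P0 Q0 α Cg a A τb τs x.net := by
  obtain ⟨-, -, hzs, hzb, -⟩ := hx
  rw [surplus_net]
  exact le_add_of_nonneg_right <| mul_nonneg (sub_nonneg.2 hτ) <|
    Finset.sum_nonneg fun i _ ↦ le_min (hzs i) (hzb i)

lemma Vval_eq_sSup_isNetted (hτ : τ.2 ≤ τ.1) :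
    Vval P0 Q0 α Cg a A Gcap R Gp T PTDF τ =
      sSup ((fun x ↦ surplus P0 Q0 α Cg a A τ.1 τ.2 x) ''
        {x : LVec N H | FeasX R Gp Gcap T PTDF x ∧ x.IsNetted}) := by
  refine csSup_eq_csSup_of_forall_exists_le ?_ ?_
  · rintro _ ⟨x, hx, rfl⟩
    exact ⟨_, mem_image_of_mem _ ⟨hx.net, x.isNetted_net⟩, hx.surplus_le_surplus_net hτ⟩
  · rintro _ ⟨x, hx, rfl⟩
    exact ⟨_, mem_image_of_mem _ hx.1, le_rfl⟩

theorem continuousOn_Vval (hCg : ∀ i, Continuous (Cg i)) :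
    ContinuousOn (fun τ ↦ Vval P0 Q0 α Cg a A Gcap R Gp T PTDF τ) {τ | τ.2 ≤ τ.1} := by
  have hcont : Continuous fun p : (ℝ × ℝ) × LVec N H ↦
      surplus P0 Q0 α Cg a A p.1.1 p.1.2 p.2 := by
    fun_prop
  exact (isCompact_setOf_feasX_isNetted.continuous_sSup hcont).continuousOn.congr
    fun _ hτ ↦ Vval_eq_sSup_isNetted hτ

theorem isGreatest_Vval (hCg : ∀ i, Continuous (Cg i))
    (hX : ∃ x : LVec N H, FeasX R Gp Gcap T PTDF x) (hτ : τ.2 ≤ τ.1) :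
    IsGreatest ((fun x ↦ surplus P0 Q0 α Cg a A τ.1 τ.2 x) ''
      {x : LVec N H | FeasX R Gp Gcap T PTDF x}) (Vval P0 Q0 α Cg a A Gcap R Gp T PTDF τ) := by
  have hcont : Continuous fun x : LVec N H ↦ surplus P0 Q0 α Cg a A τ.1 τ.2 x := by
    fun_prop
  have hne : {x : LVec N H | FeasX R Gp Gcap T PTDF x ∧ x.IsNetted}.Nonempty :=
    hX.imp' LVec.net fun x hx ↦ ⟨hx.net, x.isNetted_net⟩
  have hmax := (isCompact_setOf_feasX_isNetted.image hcont).isGreatest_sSup (hne.image _)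
  rw [Vval_eq_sSup_isNetted hτ]
  refine ⟨image_mono (fun x hx ↦ hx.1) hmax.1, ?_⟩
  rintro _ ⟨x, hx, rfl⟩
  exact (hx.surplus_le_surplus_net hτ).trans
    (hmax.2 (mem_image_of_mem _ ⟨hx.net, x.isNetted_net⟩))

end ValueFunction

lemma isCompact_Tset (τhat τlow : ℝ) : IsCompact (Tset τhat τlow) := by
  refine (isCompact_Icc (a := ((0 : ℝ), τlow)) (b := (τhat, τhat))).of_isClosed_subset ?_ ?_
  · simp only [Tset, ofPred_and]
    repeat' apply IsClosed.inter
    all_goals exact isClosed_le (by fun_prop) (by fun_prop)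
  · exact fun τ ⟨hb0, hb, hs0, hsb⟩ ↦ ⟨⟨hb0, hs0⟩, ⟨hb, hsb.trans hb⟩⟩

theorem value_function_continuous_and_max_attained_general
    {N K : ℕ} {H : Fin N → Type} [∀ i, Fintype (H i)]
    {P0 Q0 α R Gp : Fin N → ℝ} {Cg : Fin N → ℝ → ℝ} {a A Gcap : (i : Fin N) → H i → ℝ}
    {T : Fin K → ℝ} {PTDF : Fin K → Fin N → ℝ}
    (_hQ0 : ∀ i, Q0 i ≠ 0) (_hα0 : ∀ i, α i ≠ 0) (_hα1 : ∀ i, α i ≠ 1)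
    (hCg : ∀ i, Continuous (Cg i)) (hX : ∃ x : LVec N H, FeasX R Gp Gcap T PTDF x)
    {S : Set (ℝ × ℝ)} (hS : IsCompact S) (hS_nonempty : S.Nonempty)
    (hS_le : ∀ τ ∈ S, τ.2 ≤ τ.1) :
    (∀ τ ∈ S, IsGreatest ((fun x ↦ surplus P0 Q0 α Cg a A τ.1 τ.2 x) ''
      {x : LVec N H | FeasX R Gp Gcap T PTDF x}) (Vval P0 Q0 α Cg a A Gcap R Gp T PTDF τ)) ∧
    ContinuousOn (fun τ ↦ Vval P0 Q0 α Cg a A Gcap R Gp T PTDF τ) S ∧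
    ∃ τstar ∈ S, ∀ τ ∈ S, Vval P0 Q0 α Cg a A Gcap R Gp T PTDF τ ≤
      Vval P0 Q0 α Cg a A Gcap R Gp T PTDF τstar :=
  have hcont := (continuousOn_Vval hCg).mono hS_le
  ⟨fun τ hτ ↦ isGreatest_Vval hCg hX (hS_le τ hτ), hcont, hS.exists_isMaxOn hS_nonempty hcont⟩

/-- (Continuity and attainment of the maximum of the optimal value function.) `V` is
continuous on `𝒯` and attains its maximum over `𝒯`. -/
theorem value_function_continuous_and_max_attained
    (N K : ℕ) (hN : 1 ≤ N)
    (H : Fin N → Type) [∀ i, Fintype (H i)]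
    (P0 Q0 α R Gp : Fin N → ℝ) (Cg : Fin N → ℝ → ℝ)
    (a A Gcap : (i : Fin N) → H i → ℝ)
    (T : Fin K → ℝ) (PTDF : Fin K → Fin N → ℝ)
    (hP0 : ∀ i, 0 < P0 i) (hQ0 : ∀ i, 0 < Q0 i)
    (hα0 : ∀ i, 0 < α i) (hα1 : ∀ i, α i < 1)
    (hR : ∀ i, 0 < R i) (hGp : ∀ i, 0 ≤ Gp i)
    (hCg : ∀ i, ContDiff ℝ 1 (Cg i)) (hCgconv : ∀ i, StrictConvexOn ℝ Set.univ (Cg i))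
    (hGcap : ∀ i (h : H i), 0 ≤ Gcap i h)
    (ha : ∀ i (h : H i), 0 < a i h) (hA : ∀ i (h : H i), 0 < A i h)
    (hT : ∀ k, 0 < T k)
    (τhat τlow : ℝ) (hτhat : 0 < τhat) (hτlow : τlow < 0) :
    ContinuousOn (fun τ => Vval P0 Q0 α Cg a A Gcap R Gp T PTDF τ) (Tset τhat τlow) ∧
    ∃ τstar ∈ Tset τhat τlow, ∀ τ ∈ Tset τhat τlow,
      Vval P0 Q0 α Cg a A Gcap R Gp T PTDF τ ≤
        Vval P0 Q0 α Cg a A Gcap R Gp T PTDF τstar := by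
  exact (value_function_continuous_and_max_attained_general (fun i ↦ (hQ0 i).ne')
    (fun i ↦ (hα0 i).ne') (fun i ↦ (hα1 i).ne) (fun i ↦ (hCg i).continuous)
    (exists_feasX (fun i ↦ (hR i).le) hGp hGcap fun k ↦ (hT k).le) (isCompact_Tset τhat τlow)
    ⟨(0, 0), le_rfl, hτhat.le, hτlow.le, le_rfl⟩ fun _ hτ ↦ hτ.2.2.2).2
end
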